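/- Let m ≥ 0 be an integer. There is a constant C_m > 0 depending only on m such that for every F ∈ H²(T_Σ), the restriction R□^m F : Π⁺×Π⁺ → ℂ, (z₁,z₂) ↦ (□^m F)(z₁, z₂, 0), belongs to the weighted Bergman space A²_{(2m−1/2, 2m−1/2)}(Π⁺×Π⁺) and ‖R□^m F‖²_{A²_{(2m−1/2,2m−1/2)}(Π⁺×Π⁺)} ≤ C_m ‖F‖²_{H²(T_Σ)}. -/

import Mathlib

open MeasureTheory Set
open scoped ENNReal NNReal

noncomputable section

/-- The spherical cone `Σ = {y ∈ ℝ³ : y₁y₂ − y₃² > 0, y₁ > 0}`. -/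
def Sigma3 : Set (Fin 3 → ℝ) :=
  {y | 0 < y 0 * y 1 - (y 2) ^ 2 ∧ 0 < y 0}

/-- The tube domain `T_Σ = ℝ³ + iΣ ⊂ ℂ³`. -/
def TSigma : Set (Fin 3 → ℂ) :=
  {z | (fun i => (z i).im) ∈ Sigma3}

/-- Square of the Hardy space `H²(T_Σ)` norm. -/
def hardyNormSqSigma (F : (Fin 3 → ℂ) → ℂ) : ℝ≥0∞ :=
  ⨆ y ∈ Sigma3,
    ∫⁻ x : Fin 3 → ℝ, (‖F (fun i => (x i : ℂ) + (y i : ℂ) * Complex.I)‖₊ : ℝ≥0∞) ^ 2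

/-- Partial derivative in the `i`-th complex coordinate. -/
def pd (i : Fin 3) (F : (Fin 3 → ℂ) → ℂ) : (Fin 3 → ℂ) → ℂ :=
  fun z => fderiv ℂ F z (Pi.single i 1)

/-- The box operator `□ = −4 ∂²/∂z₁∂z₂ + ∂²/∂z₃²` associated to the spherical cone. -/
def BoxS (F : (Fin 3 → ℂ) → ℂ) : (Fin 3 → ℂ) → ℂ :=
  fun z => -4 * pd 0 (pd 1 F) z + pd 2 (pd 2 F) z

/-- The upper half-plane `Π⁺`. -/
def UHP : Set ℂ := {z : ℂ | 0 < z.im}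

/-- The weighted measure `dV_α(x+iy) = y^α dx dy` on the upper half-plane. -/
def Vm (α : ℝ) : Measure ℂ :=
  (volume.restrict UHP).withDensity fun z => ENNReal.ofReal (z.im ^ α)

/-- Square of the weighted Bergman space `A²_{(α₁,α₂)}(Π⁺×Π⁺)` norm:
`‖G‖² = ∫_{Π⁺×Π⁺} |G(x₁+iy₁,x₂+iy₂)|² y₁^{α₁} y₂^{α₂} dx₁dx₂dy₁dy₂`. -/
def bergNormSqProd (α₁ α₂ : ℝ) (G : ℂ × ℂ → ℂ) : ℝ≥0∞ :=
  ∫⁻ z, (‖G z‖₊ : ℝ≥0∞) ^ 2 ∂((Vm α₁).prod (Vm α₂))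

open Complex Filter Topology
open scoped FourierTransform SchwartzMap ContDiff Matrix

/-!
By the `L²` Paley–Wiener theorem, `F` is the Fourier–Laplace transform of some `f ∈ L²` supported in
the dual cone: shifting contours shows that the reweighted Fourier transforms of the slices
`F (· + iy)` all agree, and letting `y` run to infinity along rays forces the support condition.
On the Fourier side `□` is multiplication by the symbol `4π² (4ξ₁ξ₂ - ξ₃²)`, which on the dual cone
lies between `0` and `16π² ξ₁ξ₂`, and setting `z₃ = 0` integrates out `ξ₃`, which ranges over an
interval of length `4√(ξ₁ξ₂)`. After Cauchy–Schwarz on these fibres and Plancherel in `(x₁, x₂)`,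
what remains are the Gamma integrals of the Bergman weight in `y₁` and `y₂`; for the exponent
`2m - 1/2` their powers of `ξ₁ξ₂` exactly cancel those coming from the symbol and the fibre length.
-/

section FourierTransformLp

variable {E : Type*} [NormedAddCommGroup E] [InnerProductSpace ℝ E] [FiniteDimensional ℝ E]
  [MeasurableSpace E] [BorelSpace E]

lemma integral_schwartz_smul_fourier_Lp (u : 𝓢(E, ℂ)) (G : Lp (α := E) ℂ 2) :
    ∫ x, u x • (𝓕 G : Lp (α := E) ℂ 2) x = ∫ x, 𝓕 (u : E → ℂ) x • G x := by
  have h := DFunLike.congr_fun (Lp.fourier_toTemperedDistribution_eq G) u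
  rw [TemperedDistribution.fourier_apply] at h
  simp only [Lp.toTemperedDistribution_apply] at h
  exact h.symm

lemma integral_schwartz_smul_fourierInv_Lp (u : 𝓢(E, ℂ)) (G : Lp (α := E) ℂ 2) :
    ∫ x, u x • (𝓕⁻ G : Lp (α := E) ℂ 2 volume) x = ∫ x, 𝓕⁻ (u : E → ℂ) x • G x := by
  have h := DFunLike.congr_fun (Lp.fourierInv_toTemperedDistribution_eq G) u
  rw [TemperedDistribution.fourierInv_apply] at h
  simp only [Lp.toTemperedDistribution_apply, SchwartzMap.fourierInv_coe] at h
  exact h.symm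

lemma continuous_fourierInv_of_integrable {g : E → ℂ} (hg : Integrable g) : Continuous (𝓕⁻ g) :=
  VectorFourier.fourierIntegral_continuous (L := -innerₗ E) Real.continuous_fourierChar
    continuous_inner.neg hg

lemma integral_fourierInv_smul_eq_smul_fourierInv {f g : E → ℂ} (hf : Integrable f)
    (hg : Integrable g) : ∫ x, 𝓕⁻ f x • g x = ∫ x, f x • 𝓕⁻ g x := by
  have h := VectorFourier.integral_fourierIntegral_smul_eq_flip (L := -innerₗ E)
    Real.continuous_fourierChar continuous_inner.neg hf hg
  have hflip : (-innerₗ E).flip = -innerₗ E := by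
    ext
    simp [real_inner_comm]
  rwa [hflip] at h

lemma fourierInv_toLp_ae_eq {g : E → ℂ} (hg : Integrable g) (h2 : MemLp g 2) :
    (𝓕⁻ (h2.toLp g) : Lp (α := E) ℂ 2) =ᵐ[volume] 𝓕⁻ g := by
  let G : Lp (α := E) ℂ 2 := h2.toLp g
  refine ae_eq_of_integral_contDiff_smul_eq ((Lp.memLp _).locallyIntegrable one_le_two)
    (continuous_fourierInv_of_integrable hg).locallyIntegrable fun φ hφ hφc => ?_
  let u : 𝓢(E, ℂ) := (hφc.comp_left (g := ofReal) rfl).toSchwartzMap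
    (ofRealCLM.contDiff.comp hφ)
  calc ∫ x, u x • (𝓕⁻ G : Lp (α := E) ℂ 2 volume) x
      = ∫ x, 𝓕⁻ (u : E → ℂ) x • G x := integral_schwartz_smul_fourierInv_Lp u G
    _ = ∫ x, 𝓕⁻ (u : E → ℂ) x • g x :=
        integral_congr_ae (h2.coeFn_toLp.mono fun x hx => congrArg (_ • ·) hx)
    _ = ∫ x, u x • 𝓕⁻ g x := integral_fourierInv_smul_eq_smul_fourierInv u.integrable hg

lemma eLpNorm_fourier_Lp (G : Lp (α := E) ℂ 2) :
    eLpNorm (𝓕 G : Lp (α := E) ℂ 2) 2 = eLpNorm G 2 := by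
  simp only [← Lp.enorm_def, ← ofReal_norm, Lp.norm_fourier_eq]

lemma lintegral_enorm_sq_eq_eLpNorm_sq {α F : Type*} [MeasurableSpace α] [NormedAddCommGroup F]
    (μ : Measure α) (g : α → F) : ∫⁻ x, ‖g x‖ₑ ^ 2 ∂μ = eLpNorm g 2 μ ^ 2 := by
  rw [eLpNorm_eq_lintegral_rpow_enorm_toReal two_ne_zero ENNReal.ofNat_ne_top,
    ← ENNReal.rpow_natCast, ← ENNReal.rpow_mul]
  simp

lemma memLp_two_of_lintegral_enorm_sq_le {α F : Type*} [MeasurableSpace α]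
    [NormedAddCommGroup F] {μ : Measure α} {g : α → F} (hg : AEStronglyMeasurable g μ)
    {N : ℝ≥0∞} (hN : N ≠ ⊤) (h : ∫⁻ x, ‖g x‖ₑ ^ 2 ∂μ ≤ N) : MemLp g 2 μ := by
  rw [lintegral_enorm_sq_eq_eLpNorm_sq] at h
  exact ⟨hg, (ENNReal.pow_lt_top_iff.1 (h.trans_lt hN.lt_top)).resolve_right two_ne_zero⟩

lemma lintegral_enorm_fourierInv_sq_eq {f : E → ℂ} (hf : Integrable f) (h2 : MemLp f 2) :
    ∫⁻ v, ‖𝓕⁻ f v‖ₑ ^ 2 = ∫⁻ v, ‖f v‖ₑ ^ 2 := by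
  let G : Lp (α := E) ℂ 2 volume := h2.toLp
  have hinv : eLpNorm (𝓕⁻ G : Lp (α := E) ℂ 2 volume) 2 = eLpNorm G 2 := by
    rw [← eLpNorm_fourier_Lp (𝓕⁻ G), FourierTransform.fourier_fourierInv_eq]
  rw [lintegral_enorm_sq_eq_eLpNorm_sq, lintegral_enorm_sq_eq_eLpNorm_sq,
    ← eLpNorm_congr_ae (fourierInv_toLp_ae_eq hf h2), hinv, eLpNorm_congr_ae h2.coeFn_toLp]

end FourierTransformLp

section TubeDomain

variable {ι : Type*}

/-- The point `x + iy` of `ℂ^ι`. -/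
def tubePoint (x y : ι → ℝ) (i : ι) : ℂ :=
  x i + y i * I

/-- The tube `ℝ^ι + iΩ`. -/
def tubeDomain (Ω : Set (ι → ℝ)) : Set (ι → ℂ) :=
  {z | (fun i => (z i).im) ∈ Ω}

@[simp] lemma im_tubePoint (x y : ι → ℝ) (i : ι) : (tubePoint x y i).im = y i := by
  simp [tubePoint]

lemma tubePoint_mem_tubeDomain {Ω : Set (ι → ℝ)} {y : ι → ℝ} (hy : y ∈ Ω) (x : ι → ℝ) :
    tubePoint x y ∈ tubeDomain Ω := by
  simpa [tubeDomain] using hy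

lemma isOpen_tubeDomain {Ω : Set (ι → ℝ)} (hΩ : IsOpen Ω) : IsOpen (tubeDomain Ω) :=
  hΩ.preimage (by fun_prop : Continuous fun (z : ι → ℂ) i => (z i).im)

lemma tubePoint_re_im (z : ι → ℂ) : tubePoint (fun i => (z i).re) (fun i => (z i).im) = z := by
  ext i
  exact re_add_im (z i)

@[fun_prop] lemma continuous_tubePoint {X : Type*} [TopologicalSpace X] {a b : X → ι → ℝ}
    (ha : Continuous a) (hb : Continuous b) : Continuous fun p => tubePoint (a p) (b p) := by
  unfold tubePoint
  fun_prop

lemma neg_tubePoint (x y : ι → ℝ) : -tubePoint x y = tubePoint (-x) (-y) := by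
  ext i
  simp only [tubePoint, Pi.neg_apply, ofReal_neg]
  ring

lemma tubePoint_add_smul (x y v : ι → ℝ) (w : ℂ) :
    tubePoint (x + w.re • v) (y + w.im • v) = tubePoint x y + w • fun i => (v i : ℂ) := by
  ext i
  simp only [tubePoint, Pi.add_apply, Pi.smul_apply, smul_eq_mul]
  conv_rhs => rw [← re_add_im w]
  push_cast
  ring

end TubeDomain

section FourierKernel

variable {ι : Type*} [Fintype ι]

/-- The exponential `exp (2πi ⟨z, ξ⟩)` with a complex first argument, for the bilinear dot product
`⟨z, ξ⟩ = ∑ zᵢ ξᵢ`. -/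
def fourierKernel (z : ι → ℂ) (ξ : ι → ℝ) : ℂ :=
  cexp (2 * Real.pi * I * ∑ i, z i * ξ i)

/-- The Fourier–Laplace transform `z ↦ ∫ exp (2πi ⟨z, ξ⟩) f ξ dξ`; on real arguments it is the
inverse Fourier transform of `f`. -/
def fourierLaplace (f : (ι → ℝ) → ℂ) (z : ι → ℂ) : ℂ :=
  ∫ ξ, fourierKernel z ξ * f ξ

/-- The weight `exp (-2π ⟨y, ξ⟩)`, the modulus of `fourierKernel (x + iy) ξ`. -/
def expWeight (y ξ : ι → ℝ) : ℝ :=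
  Real.exp (-2 * Real.pi * (y ⬝ᵥ ξ))

lemma expWeight_pos (y ξ : ι → ℝ) : 0 < expWeight y ξ :=
  Real.exp_pos _

lemma expWeight_add (y y' ξ : ι → ℝ) : expWeight (y + y') ξ = expWeight y ξ * expWeight y' ξ := by
  simp only [expWeight, add_dotProduct, mul_add, Real.exp_add]

@[simp] lemma expWeight_zero (ξ : ι → ℝ) : expWeight 0 ξ = 1 := by
  simp [expWeight]

lemma expWeight_mul_neg (y ξ : ι → ℝ) : expWeight y ξ * expWeight (-y) ξ = 1 := by
  rw [← expWeight_add, add_neg_cancel, expWeight_zero]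

@[fun_prop] lemma continuous_expWeight (y : ι → ℝ) : Continuous (expWeight y) := by
  unfold expWeight dotProduct
  fun_prop

@[fun_prop] lemma continuous_fourierKernel (z : ι → ℂ) : Continuous (fourierKernel z) := by
  unfold fourierKernel
  fun_prop

lemma norm_fourierKernel (z : ι → ℂ) (ξ : ι → ℝ) :
    ‖fourierKernel z ξ‖ = expWeight (fun i => (z i).im) ξ := by
  simp [fourierKernel, expWeight, Complex.norm_exp, dotProduct]

lemma fourierKernel_tubePoint (x y ξ : ι → ℝ) :
    fourierKernel (tubePoint x y) ξ = fourierKernel (tubePoint x 0) ξ * expWeight y ξ := by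
  simp only [fourierKernel, expWeight, tubePoint, dotProduct, ofReal_exp, ← Complex.exp_add]
  congr 1
  push_cast
  simp only [Finset.mul_sum, ← Finset.sum_add_distrib]
  refine Finset.sum_congr rfl fun i _ => ?_
  simp only [Pi.zero_apply, ofReal_zero, zero_mul, add_zero]
  linear_combination 2 * (Real.pi : ℂ) * y i * ξ i * I_sq

lemma fourierLaplace_tubePoint (f : (ι → ℝ) → ℂ) (x y : ι → ℝ) :
    fourierLaplace f (tubePoint x y) =
      fourierLaplace (fun ξ => expWeight y ξ * f ξ) (tubePoint x 0) := by
  simp only [fourierLaplace, fourierKernel_tubePoint x y, mul_assoc]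

lemma fourierLaplace_tubePoint_zero (f : (ι → ℝ) → ℂ) (x : ι → ℝ) :
    fourierLaplace f (tubePoint x 0) =
      𝓕⁻ (fun v : EuclideanSpace ℝ ι => f v.ofLp) (WithLp.toLp 2 x) := by
  have me := (MeasurableEquiv.toLp 2 (ι → ℝ)).symm.measurableEmbedding
  rw [Real.fourierInv_eq', fourierLaplace,
    ← (PiLp.volume_preserving_ofLp ι).integral_comp me]
  refine integral_congr_ae (Eventually.of_forall fun v => ?_)
  simp only [fourierKernel, tubePoint, smul_eq_mul, PiLp.inner_apply, Pi.zero_apply, ofReal_zero,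
    zero_mul, add_zero]
  congr 2
  simp only [RCLike.inner_apply, conj_trivial]
  push_cast
  ring

end FourierKernel

section FourierL2

variable {ι : Type*} [Fintype ι] {g : (ι → ℝ) → ℂ}

lemma memLp_comp_ofLp (hg : MemLp g 2) : MemLp (fun v : EuclideanSpace ℝ ι => g v.ofLp) 2 :=
  hg.comp_measurePreserving (PiLp.volume_preserving_ofLp ι)

/-- The `L²` Fourier transform of a square-integrable function on `ι → ℝ`, obtained from the one
Mathlib provides on `EuclideanSpace ℝ ι`. -/
def fourierL2 (hg : MemLp g 2) (ξ : ι → ℝ) : ℂ :=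
  (𝓕 (memLp_comp_ofLp hg).toLp : Lp (α := EuclideanSpace ℝ ι) ℂ 2 volume) (WithLp.toLp 2 ξ)

lemma measurable_fourierL2 (hg : MemLp g 2) : Measurable (fourierL2 hg) :=
  (Lp.stronglyMeasurable _).measurable.comp (PiLp.volume_preserving_toLp ι).measurable

lemma memLp_fourierL2 (hg : MemLp g 2) : MemLp (fourierL2 hg) 2 :=
  (Lp.memLp _).comp_measurePreserving (PiLp.volume_preserving_toLp ι)

lemma lintegral_enorm_fourierL2_sq (hg : MemLp g 2) :
    ∫⁻ ξ, ‖fourierL2 hg ξ‖ₑ ^ 2 = ∫⁻ x, ‖g x‖ₑ ^ 2 := by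
  let G : Lp (α := EuclideanSpace ℝ ι) ℂ 2 volume := (memLp_comp_ofLp hg).toLp
  let Ghat : Lp (α := EuclideanSpace ℝ ι) ℂ 2 volume := 𝓕 G
  have hGhat : eLpNorm Ghat 2 = eLpNorm G 2 := eLpNorm_fourier_Lp G
  rw [lintegral_enorm_sq_eq_eLpNorm_sq, lintegral_enorm_sq_eq_eLpNorm_sq]
  congr 1
  have hleft : eLpNorm (fourierL2 hg) 2 = eLpNorm Ghat 2 :=
    eLpNorm_comp_measurePreserving (Lp.aestronglyMeasurable Ghat) (PiLp.volume_preserving_toLp ι)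
  have hright : eLpNorm G 2 = eLpNorm g 2 :=
    (eLpNorm_congr_ae (memLp_comp_ofLp hg).coeFn_toLp).trans
      (eLpNorm_comp_measurePreserving hg.1 (PiLp.volume_preserving_ofLp ι))
  rw [hleft, hGhat, hright]

lemma integral_smul_fourierL2 (hg : MemLp g 2) {φ : (ι → ℝ) → ℝ} (hφ : ContDiff ℝ ∞ φ)
    (hφc : HasCompactSupport φ) :
    ∫ ξ, φ ξ • fourierL2 hg ξ =
      ∫ x, fourierLaplace (fun ξ => φ ξ) (tubePoint (-x) 0) * g x := by
  let G : Lp (α := EuclideanSpace ℝ ι) ℂ 2 volume := (memLp_comp_ofLp hg).toLp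
  have mp := PiLp.volume_preserving_ofLp ι
  have me := (MeasurableEquiv.toLp 2 (ι → ℝ)).symm.measurableEmbedding
  have hc : HasCompactSupport fun v : EuclideanSpace ℝ ι => φ v.ofLp :=
    hφc.comp_homeomorph (EuclideanSpace.equiv ι ℝ).toHomeomorph
  let u : 𝓢(EuclideanSpace ℝ ι, ℂ) := (hc.comp_left (g := ofReal) rfl).toSchwartzMap
    (ofRealCLM.contDiff.comp (hφ.comp (PiLp.contDiff_ofLp)))
  calc ∫ ξ, φ ξ • fourierL2 hg ξ
      = ∫ v, u v • (𝓕 G : Lp (α := EuclideanSpace ℝ ι) ℂ 2 volume) v := (mp.integral_comp me _).symm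
    _ = ∫ v, 𝓕 (u : EuclideanSpace ℝ ι → ℂ) v • G v := integral_schwartz_smul_fourier_Lp u G
    _ = ∫ v, 𝓕 (u : EuclideanSpace ℝ ι → ℂ) v • g v.ofLp :=
        integral_congr_ae ((memLp_comp_ofLp hg).coeFn_toLp.mono fun v hv => congrArg (_ • ·) hv)
    _ = ∫ x, 𝓕 (u : EuclideanSpace ℝ ι → ℂ) (WithLp.toLp 2 x) • g x :=
        mp.integral_comp me fun x => 𝓕 (u : EuclideanSpace ℝ ι → ℂ) (WithLp.toLp 2 x) • g x
    _ = ∫ x, fourierLaplace (fun ξ => φ ξ) (tubePoint (-x) 0) * g x := by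
        simp only [fourierLaplace_tubePoint_zero, Real.fourierInv_eq_fourier_neg, WithLp.toLp_neg,
          neg_neg]
        rfl

lemma ae_eq_fourierLaplace_fourierL2 (hg : MemLp g 2) (hi : Integrable (fourierL2 hg)) :
    ∀ᵐ x, g x = fourierLaplace (fourierL2 hg) (tubePoint x 0) := by
  let G : Lp (α := EuclideanSpace ℝ ι) ℂ 2 volume := (memLp_comp_ofLp hg).toLp
  let Ghat : Lp (α := EuclideanSpace ℝ ι) ℂ 2 volume := 𝓕 G
  have hi' : Integrable Ghat :=
    (PiLp.volume_preserving_ofLp ι).integrable_comp_of_integrable hi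
  have hinv := fourierInv_toLp_ae_eq hi' (Lp.memLp Ghat)
  rw [Lp.toLp_coeFn, FourierTransform.fourierInv_fourier_eq] at hinv
  have hG : ∀ᵐ v : EuclideanSpace ℝ ι, g v.ofLp = 𝓕⁻ (Ghat : EuclideanSpace ℝ ι → ℂ) v :=
    (memLp_comp_ofLp hg).coeFn_toLp.symm.trans hinv
  filter_upwards [(PiLp.volume_preserving_toLp ι).quasiMeasurePreserving.ae hG] with x hx
  rw [fourierLaplace_tubePoint_zero]
  exact hx

lemma lintegral_enorm_fourierLaplace_sq_le {f : (ι → ℝ) → ℂ} {y : ι → ℝ}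
    (hf : Integrable fun ξ => expWeight y ξ * f ξ) :
    ∫⁻ x, ‖fourierLaplace f (tubePoint x y)‖ₑ ^ 2 ≤ ∫⁻ ξ, ‖expWeight y ξ * f ξ‖ₑ ^ 2 := by
  set h : (ι → ℝ) → ℂ := fun ξ => expWeight y ξ * f ξ
  by_cases h2 : MemLp h 2
  · have me := (MeasurableEquiv.toLp 2 (ι → ℝ)).symm.measurableEmbedding
    have me' := (MeasurableEquiv.toLp 2 (ι → ℝ)).measurableEmbedding
    let H : EuclideanSpace ℝ ι → ℂ := fun v => h v.ofLp
    have hH : Integrable H := (PiLp.volume_preserving_ofLp ι).integrable_comp_of_integrable hf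
    refine le_of_eq ?_
    calc ∫⁻ x, ‖fourierLaplace f (tubePoint x y)‖ₑ ^ 2
        = ∫⁻ x, ‖𝓕⁻ H (WithLp.toLp 2 x)‖ₑ ^ 2 := by
          simp only [fourierLaplace_tubePoint f, fourierLaplace_tubePoint_zero, H, h]
      _ = ∫⁻ v, ‖𝓕⁻ H v‖ₑ ^ 2 :=
          (PiLp.volume_preserving_toLp ι).lintegral_comp_emb me' fun v => ‖𝓕⁻ H v‖ₑ ^ 2
      _ = ∫⁻ v, ‖H v‖ₑ ^ 2 := lintegral_enorm_fourierInv_sq_eq hH (memLp_comp_ofLp h2)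
      _ = ∫⁻ ξ, ‖h ξ‖ₑ ^ 2 :=
          (PiLp.volume_preserving_ofLp ι).lintegral_comp_emb me fun ξ => ‖h ξ‖ₑ ^ 2
  · have htop : eLpNorm h 2 = ⊤ := of_not_not fun hlt => h2 ⟨hf.1, lt_top_iff_ne_top.2 hlt⟩
    rw [lintegral_enorm_sq_eq_eLpNorm_sq _ h, htop]
    simp

end FourierL2

section LaplaceIntegrable

lemma exists_forall_sub_mul_sign_mem {ι : Type*} [Finite ι] {Ω : Set (ι → ℝ)} (hΩ : IsOpen Ω)
    {y : ι → ℝ} (hy : y ∈ Ω) :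
    ∃ s > 0, ∀ σ : ι → SignType, (fun i => y i - s * (σ i : ℝ)) ∈ Ω := by
  cases nonempty_fintype ι
  obtain ⟨ε, hε, hball⟩ := Metric.isOpen_iff.1 hΩ y hy
  refine ⟨ε / 2, half_pos hε, fun σ => hball ((dist_pi_lt_iff hε).2 fun i => ?_)⟩
  rw [Real.dist_eq, sub_sub_cancel_left, abs_neg, abs_mul, abs_of_pos (half_pos hε)]
  have hσ : |(σ i : ℝ)| ≤ 1 := by rcases σ i with _ | _ | _ <;> simp
  nlinarith

variable {ι : Type*} [Fintype ι] {Ω : Set (ι → ℝ)} {f g : (ι → ℝ) → ℂ}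

/-- Absolute convergence of the Fourier–Laplace integral of `f` at every point of the tube over
`Ω`. -/
def LaplaceIntegrable (Ω : Set (ι → ℝ)) (f : (ι → ℝ) → ℂ) : Prop :=
  ∀ y ∈ Ω, Integrable fun ξ => expWeight y ξ * f ξ

lemma LaplaceIntegrable.aestronglyMeasurable (hf : LaplaceIntegrable Ω f) (hΩ : Ω.Nonempty) :
    AEStronglyMeasurable f := by
  obtain ⟨y, hy⟩ := hΩ
  have hinv : f = fun ξ => (expWeight (-y) ξ : ℂ) * (expWeight y ξ * f ξ) := by
    ext ξ
    rw [← mul_assoc, ← ofReal_mul, mul_comm (expWeight _ _), expWeight_mul_neg, ofReal_one, one_mul]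
  rw [hinv]
  exact (by fun_prop : Continuous fun ξ => (expWeight (-y) ξ : ℂ)).aestronglyMeasurable.mul
    (hf y hy).1

lemma LaplaceIntegrable.integrable_fourierKernel_mul (hf : LaplaceIntegrable Ω f) {z : ι → ℂ}
    (hz : z ∈ tubeDomain Ω) : Integrable fun ξ => fourierKernel z ξ * f ξ := by
  refine (hf _ hz).mono ((continuous_fourierKernel z).aestronglyMeasurable.mul
    (hf.aestronglyMeasurable ⟨_, hz⟩)) (ae_of_all _ fun ξ => ?_)
  rw [norm_mul, norm_mul, norm_fourierKernel, norm_real, Real.norm_of_nonneg (expWeight_pos _ _).le]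

lemma LaplaceIntegrable.add (hf : LaplaceIntegrable Ω f) (hg : LaplaceIntegrable Ω g) :
    LaplaceIntegrable Ω (fun ξ => f ξ + g ξ) := fun y hy => by
  simp only [mul_add]
  exact (hf y hy).add (hg y hy)

lemma LaplaceIntegrable.const_mul (hf : LaplaceIntegrable Ω f) (c : ℂ) :
    LaplaceIntegrable Ω (fun ξ => c * f ξ) := fun y hy => by
  simpa only [mul_left_comm] using (hf y hy).const_mul c

lemma exp_sum_abs_le_sum_exp_sign [DecidableEq ι] (ξ : ι → ℝ) :
    Real.exp (∑ i, |ξ i|) ≤ ∑ σ : ι → SignType, Real.exp (∑ i, (σ i : ℝ) * ξ i) := by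
  simpa only [sign_mul_self] using Finset.single_le_sum
    (f := fun σ : ι → SignType => Real.exp (∑ i, (σ i : ℝ) * ξ i))
    (fun _ _ => (Real.exp_pos _).le) (Finset.mem_univ fun i => SignType.sign (ξ i))

lemma LaplaceIntegrable.exists_integrable_exp_mul (hf : LaplaceIntegrable Ω f) (hΩ : IsOpen Ω)
    {y : ι → ℝ} (hy : y ∈ Ω) :
    ∃ s > 0, Integrable fun ξ =>
      Real.exp (2 * Real.pi * s * ∑ i, |ξ i|) * (expWeight y ξ * ‖f ξ‖) := by
  classical
  obtain ⟨s, hs, hmem⟩ := exists_forall_sub_mul_sign_mem hΩ hy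
  refine ⟨s, hs, ?_⟩
  have hsum : Integrable fun ξ => ∑ σ : ι → SignType,
      ‖(expWeight (fun i => y i - s * (σ i : ℝ)) ξ : ℂ) * f ξ‖ :=
    integrable_finsetSum _ fun σ _ => (hf _ (hmem σ)).norm
  refine hsum.mono' ?_ (ae_of_all _ fun ξ => ?_)
  · exact (by fun_prop : Continuous fun ξ : ι → ℝ =>
      Real.exp (2 * Real.pi * s * ∑ i, |ξ i|)).aestronglyMeasurable.mul
      ((continuous_expWeight y).aestronglyMeasurable.mul (hf.aestronglyMeasurable ⟨y, hy⟩).norm)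
  have hexp (σ : ι → SignType) : expWeight (fun i => y i - s * (σ i : ℝ)) ξ =
      Real.exp (∑ i, (σ i : ℝ) * (2 * Real.pi * s * ξ i)) * expWeight y ξ := by
    simp only [expWeight, dotProduct, ← Real.exp_add, Finset.mul_sum, ← Finset.sum_add_distrib]
    congr 1
    exact Finset.sum_congr rfl fun i _ => by ring
  have hle := exp_sum_abs_le_sum_exp_sign fun i => 2 * Real.pi * s * ξ i
  simp only [abs_mul, abs_of_pos hs, abs_of_pos Real.pi_pos, abs_two, ← Finset.mul_sum] at hle
  simp only [norm_mul, norm_real, Real.norm_eq_abs, Real.abs_exp, abs_norm,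
    abs_of_pos (expWeight_pos _ _), hexp, mul_assoc (Real.exp (∑ _, _)), ← Finset.sum_mul]
  exact mul_le_mul_of_nonneg_right hle (mul_nonneg (expWeight_pos y ξ).le (norm_nonneg _))

lemma LaplaceIntegrable.coord_mul (hf : LaplaceIntegrable Ω f) (hΩ : IsOpen Ω) (i : ι) :
    LaplaceIntegrable Ω (fun ξ => ξ i * f ξ) := by
  intro y hy
  obtain ⟨s, hs, hint⟩ := hf.exists_integrable_exp_mul hΩ hy
  refine (hint.const_mul (2 * Real.pi * s)⁻¹).mono' ?_ (ae_of_all _ fun ξ => ?_)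
  · exact (by fun_prop : Continuous fun ξ => (expWeight y ξ : ℂ)).aestronglyMeasurable.mul
      ((by fun_prop : Continuous fun ξ : ι → ℝ => (ξ i : ℂ)).aestronglyMeasurable.mul
        (hf.aestronglyMeasurable ⟨y, hy⟩))
  have hpos : 0 < 2 * Real.pi * s := by positivity
  have hcoord : |ξ i| ≤ (2 * Real.pi * s)⁻¹ * Real.exp (2 * Real.pi * s * ∑ j, |ξ j|) := by
    rw [inv_mul_eq_div, le_div_iff₀' hpos]
    calc 2 * Real.pi * s * |ξ i| ≤ 2 * Real.pi * s * ∑ j, |ξ j| := by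
          gcongr
          exact Finset.single_le_sum (fun j _ => abs_nonneg (ξ j)) (Finset.mem_univ i)
      _ ≤ _ := (le_add_of_nonneg_right zero_le_one).trans (Real.add_one_le_exp _)
  calc ‖(expWeight y ξ : ℂ) * (ξ i * f ξ)‖ = |ξ i| * (expWeight y ξ * ‖f ξ‖) := by
        simp only [norm_mul, norm_real, Real.norm_eq_abs, abs_of_pos (expWeight_pos _ _)]
        ring
    _ ≤ _ := by
        rw [← mul_assoc (2 * Real.pi * s)⁻¹]
        exact mul_le_mul_of_nonneg_right hcoord (mul_nonneg (expWeight_pos y ξ).le (norm_nonneg _))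

lemma expWeight_le_exp_mul_expWeight {y y' : ι → ℝ} {r : ℝ} (h : ∀ i, |y' i - y i| ≤ r)
    (ξ : ι → ℝ) :
    expWeight y' ξ ≤ Real.exp (2 * Real.pi * r * ∑ i, |ξ i|) * expWeight y ξ := by
  have hdot : (y - y') ⬝ᵥ ξ ≤ r * ∑ i, |ξ i| := by
    rw [dotProduct, Finset.mul_sum]
    refine Finset.sum_le_sum fun i _ => (le_abs_self _).trans ?_
    rw [abs_mul, Pi.sub_apply, abs_sub_comm]
    exact mul_le_mul_of_nonneg_right (h i) (abs_nonneg _)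
  rw [sub_dotProduct] at hdot
  rw [expWeight, expWeight, ← Real.exp_add, Real.exp_le_exp]
  nlinarith [Real.pi_pos]

/-- The logarithmic derivative `w ↦ 2πi ⟨w, ξ⟩` of `fourierKernel · ξ`. -/
def fourierKernelLogDeriv (ξ : ι → ℝ) : (ι → ℂ) →L[ℂ] ℂ :=
  ∑ i, (2 * Real.pi * I * ξ i) • (ContinuousLinearMap.proj i : (ι → ℂ) →L[ℂ] ℂ)

lemma norm_fourierKernelLogDeriv_le (ξ : ι → ℝ) :
    ‖fourierKernelLogDeriv ξ‖ ≤ 2 * Real.pi * ∑ i, |ξ i| := by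
  rw [Finset.mul_sum]
  refine norm_sum_le_of_le _ fun i _ => ?_
  have hproj : ‖(ContinuousLinearMap.proj i : (ι → ℂ) →L[ℂ] ℂ)‖ ≤ 1 :=
    ContinuousLinearMap.opNorm_le_bound _ zero_le_one fun w =>
      (norm_le_pi_norm w i).trans_eq (one_mul _).symm
  rw [norm_smul]
  refine (mul_le_of_le_one_right (norm_nonneg _) hproj).trans_eq ?_
  simp [abs_of_pos Real.pi_pos]

lemma hasFDerivAt_fourierKernel (z : ι → ℂ) (ξ : ι → ℝ) :
    HasFDerivAt (fun w => fourierKernel w ξ) (fourierKernel z ξ • fourierKernelLogDeriv ξ) z := by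
  have hlin : HasFDerivAt (fun w : ι → ℂ => 2 * Real.pi * I * ∑ i, w i * ξ i)
      (fourierKernelLogDeriv ξ) z := by
    convert! (fourierKernelLogDeriv ξ).hasFDerivAt (x := z) using 1
    ext w
    simp only [fourierKernelLogDeriv, sum_apply, Finset.mul_sum,
      smul_apply, ContinuousLinearMap.proj_apply, smul_eq_mul]
    exact Finset.sum_congr rfl fun i _ => by ring
  exact hlin.cexp

lemma norm_fourierKernel_mul_smul_logDeriv_le {z w : ι → ℂ} {r : ℝ} (hr : 0 < r)
    (hw : ‖w - z‖ ≤ r) (ξ : ι → ℝ) (c : ℂ) :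
    ‖(fourierKernel w ξ * c) • fourierKernelLogDeriv ξ‖ ≤ r⁻¹ *
      (Real.exp (2 * Real.pi * (2 * r) * ∑ i, |ξ i|) *
        (expWeight (fun i => (z i).im) ξ * ‖c‖)) := by
  set E := Real.exp (2 * Real.pi * r * ∑ i, |ξ i|) with hE
  have hweight : expWeight (fun i => (w i).im) ξ ≤ E * expWeight (fun i => (z i).im) ξ :=
    expWeight_le_exp_mul_expWeight (fun i => by
      rw [← sub_im]
      exact (abs_im_le_norm _).trans ((norm_le_pi_norm (w - z) i).trans hw)) ξ
  have hlog : ‖fourierKernelLogDeriv ξ‖ ≤ r⁻¹ * E := by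
    refine (norm_fourierKernelLogDeriv_le ξ).trans ?_
    rw [inv_mul_eq_div, le_div_iff₀ hr]
    linarith [Real.add_one_le_exp (2 * Real.pi * r * ∑ i, |ξ i|)]
  calc ‖(fourierKernel w ξ * c) • fourierKernelLogDeriv ξ‖
      = ‖fourierKernelLogDeriv ξ‖ * (expWeight (fun i => (w i).im) ξ * ‖c‖) := by
        rw [norm_smul, norm_mul, norm_fourierKernel, mul_comm]
    _ ≤ r⁻¹ * E * (E * expWeight (fun i => (z i).im) ξ * ‖c‖) :=
        mul_le_mul hlog (mul_le_mul_of_nonneg_right hweight (norm_nonneg c))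
          (mul_nonneg (expWeight_pos _ ξ).le (norm_nonneg c))
          (mul_nonneg (inv_nonneg.2 hr.le) (Real.exp_pos _).le)
    _ = r⁻¹ * (E * E * (expWeight (fun i => (z i).im) ξ * ‖c‖)) := by ring
    _ = _ := by
        rw [hE, ← Real.exp_add]
        ring_nf

lemma LaplaceIntegrable.hasFDerivAt_integral (hf : LaplaceIntegrable Ω f) (hΩ : IsOpen Ω)
    {z : ι → ℂ} (hz : z ∈ tubeDomain Ω) :
    HasFDerivAt (fourierLaplace f)
      (∫ ξ, (fourierKernel z ξ * f ξ) • fourierKernelLogDeriv ξ) z := by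
  obtain ⟨s, hs, hint⟩ := hf.exists_integrable_exp_mul hΩ hz
  have hfm := hf.aestronglyMeasurable ⟨_, hz⟩
  have hL : Continuous (fourierKernelLogDeriv : (ι → ℝ) → (ι → ℂ) →L[ℂ] ℂ) := by
    unfold fourierKernelLogDeriv
    fun_prop
  have hderiv (ξ : ι → ℝ) (w : ι → ℂ) : HasFDerivAt (fun w => fourierKernel w ξ * f ξ)
      ((fourierKernel w ξ * f ξ) • fourierKernelLogDeriv ξ) w := by
    convert! (hasFDerivAt_fourierKernel w ξ).mul_const (f ξ) using 1
    rw [smul_smul, mul_comm]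
  refine hasFDerivAt_integral_of_dominated_of_fderiv_le (Metric.ball_mem_nhds z (half_pos hs))
    (Eventually.of_forall fun w => (continuous_fourierKernel w).aestronglyMeasurable.mul hfm)
    (hf.integrable_fourierKernel_mul hz)
    (((continuous_fourierKernel z).aestronglyMeasurable.mul hfm).smul hL.aestronglyMeasurable)
    (ae_of_all _ fun ξ w hw => ?_) (hint.const_mul (s / 2)⁻¹) (ae_of_all _ fun ξ w _ => hderiv ξ w)
  simpa only [mul_div_cancel₀ s (two_ne_zero' ℝ)] using
    norm_fourierKernel_mul_smul_logDeriv_le (half_pos hs) (mem_ball_iff_norm.1 hw).le ξ (f ξ)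

lemma LaplaceIntegrable.hasFDerivAt_fourierLaplace (hf : LaplaceIntegrable Ω f) (hΩ : IsOpen Ω)
    {z : ι → ℂ} (hz : z ∈ tubeDomain Ω) :
    HasFDerivAt (fourierLaplace f)
      (∑ i, fourierLaplace (fun ξ => 2 * Real.pi * I * (ξ i * f ξ)) z •
        (ContinuousLinearMap.proj i : (ι → ℂ) →L[ℂ] ℂ)) z := by
  refine (hf.hasFDerivAt_integral hΩ hz).congr_fderiv ?_
  have hint (i : ι) : Integrable fun ξ =>
      fourierKernel z ξ * (2 * Real.pi * I * (ξ i * f ξ)) :=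
    ((hf.coord_mul hΩ i).const_mul _).integrable_fourierKernel_mul hz
  calc ∫ ξ, (fourierKernel z ξ * f ξ) • fourierKernelLogDeriv ξ
      = ∫ ξ, ∑ i, (fourierKernel z ξ * (2 * Real.pi * I * (ξ i * f ξ))) •
          (ContinuousLinearMap.proj i : (ι → ℂ) →L[ℂ] ℂ) := by
        refine integral_congr_ae (ae_of_all _ fun ξ => ?_)
        simp only [fourierKernelLogDeriv, Finset.smul_sum, smul_smul]
        exact Finset.sum_congr rfl fun i _ => by ring_nf
    _ = ∑ i, ∫ ξ, (fourierKernel z ξ * (2 * Real.pi * I * (ξ i * f ξ))) •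
          (ContinuousLinearMap.proj i : (ι → ℂ) →L[ℂ] ℂ) :=
        integral_finsetSum _ fun i _ => (hint i).smul_const _
    _ = _ := Finset.sum_congr rfl fun i _ => integral_smul_const _ _

lemma LaplaceIntegrable.differentiableOn_fourierLaplace (hf : LaplaceIntegrable Ω f)
    (hΩ : IsOpen Ω) : DifferentiableOn ℂ (fourierLaplace f) (tubeDomain Ω) := fun _ hz =>
  (hf.hasFDerivAt_fourierLaplace hΩ hz).differentiableAt.differentiableWithinAt

lemma LaplaceIntegrable.fderiv_fourierLaplace_single [DecidableEq ι] (hf : LaplaceIntegrable Ω f)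
    (hΩ : IsOpen Ω) {z : ι → ℂ} (hz : z ∈ tubeDomain Ω) (i : ι) :
    fderiv ℂ (fourierLaplace f) z (Pi.single i 1) =
      fourierLaplace (fun ξ => 2 * Real.pi * I * (ξ i * f ξ)) z := by
  rw [(hf.hasFDerivAt_fourierLaplace hΩ hz).fderiv]
  simp [Pi.single_apply]

lemma fourierLaplace_add (hf : LaplaceIntegrable Ω f) (hg : LaplaceIntegrable Ω g) {z : ι → ℂ}
    (hz : z ∈ tubeDomain Ω) :
    fourierLaplace (fun ξ => f ξ + g ξ) z = fourierLaplace f z + fourierLaplace g z := by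
  simp only [fourierLaplace, mul_add]
  exact integral_add (hf.integrable_fourierKernel_mul hz) (hg.integrable_fourierKernel_mul hz)

lemma fourierLaplace_const_mul (c : ℂ) (f : (ι → ℝ) → ℂ) (z : ι → ℂ) :
    fourierLaplace (fun ξ => c * f ξ) z = c * fourierLaplace f z := by
  simp only [fourierLaplace, mul_left_comm _ c, integral_const_mul]

end LaplaceIntegrable

section BoxOperator

variable {Ω : Set (Fin 3 → ℝ)} {f : (Fin 3 → ℝ) → ℂ}

/-- The quadratic form `4π² (4 ξ₁ ξ₂ - ξ₃²)` by which `□` acts on `exp (2πi ⟨z, ξ⟩)`. In the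
statement's pairing the frequency is `(4π ξ₁, 4π ξ₂, 2π ξ₃)`. -/
def boxSymbol (ξ : Fin 3 → ℝ) : ℝ :=
  4 * Real.pi ^ 2 * (4 * ξ 0 * ξ 1 - ξ 2 ^ 2)

lemma LaplaceIntegrable.boxSymbol_mul (hf : LaplaceIntegrable Ω f) (hΩ : IsOpen Ω) :
    LaplaceIntegrable Ω (fun ξ => boxSymbol ξ * f ξ) := by
  convert (((hf.coord_mul hΩ 1).coord_mul hΩ 0).const_mul (16 * Real.pi ^ 2)).add
    (((hf.coord_mul hΩ 2).coord_mul hΩ 2).const_mul (-(4 * Real.pi ^ 2))) using 2 with ξ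
  simp only [boxSymbol]
  push_cast
  ring

lemma LaplaceIntegrable.boxSymbol_pow_mul (hf : LaplaceIntegrable Ω f) (hΩ : IsOpen Ω) (m : ℕ) :
    LaplaceIntegrable Ω (fun ξ => boxSymbol ξ ^ m * f ξ) := by
  induction m with
  | zero => simpa only [pow_zero, one_mul] using hf
  | succ m ih => simpa only [pow_succ', mul_assoc] using ih.boxSymbol_mul hΩ

lemma pd_congr_of_eqOn {F G : (Fin 3 → ℂ) → ℂ} {U : Set (Fin 3 → ℂ)} (hU : IsOpen U)
    (h : EqOn F G U) (i : Fin 3) : EqOn (pd i F) (pd i G) U := fun z hz => by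
  rw [pd, pd, (h.eventuallyEq_of_mem (hU.mem_nhds hz)).fderiv_eq]

lemma boxS_congr_of_eqOn {F G : (Fin 3 → ℂ) → ℂ} {U : Set (Fin 3 → ℂ)} (hU : IsOpen U)
    (h : EqOn F G U) : EqOn (BoxS F) (BoxS G) U := fun z hz => by
  have hpd (i : Fin 3) := pd_congr_of_eqOn hU (pd_congr_of_eqOn hU h i) i
  rw [BoxS, BoxS, pd_congr_of_eqOn hU (pd_congr_of_eqOn hU h 1) 0 hz, hpd 2 hz]

lemma LaplaceIntegrable.pd_pd_fourierLaplace (hf : LaplaceIntegrable Ω f) (hΩ : IsOpen Ω)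
    {z : Fin 3 → ℂ} (hz : z ∈ tubeDomain Ω) (i j : Fin 3) :
    pd i (pd j (fourierLaplace f)) z =
      -(4 * Real.pi ^ 2) * fourierLaplace (fun ξ => ξ i * (ξ j * f ξ)) z := by
  have hj : EqOn (pd j (fourierLaplace f))
      (fourierLaplace fun ξ => 2 * Real.pi * I * (ξ j * f ξ)) (tubeDomain Ω) :=
    fun w hw => hf.fderiv_fourierLaplace_single hΩ hw j
  rw [pd_congr_of_eqOn (isOpen_tubeDomain hΩ) hj i hz, pd,
    ((hf.coord_mul hΩ j).const_mul _).fderiv_fourierLaplace_single hΩ hz i,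
    ← fourierLaplace_const_mul]
  congr 1 with ξ
  linear_combination (4 * (Real.pi : ℂ) ^ 2 * (ξ i * (ξ j * f ξ))) * I_sq

lemma LaplaceIntegrable.boxS_fourierLaplace (hf : LaplaceIntegrable Ω f) (hΩ : IsOpen Ω) :
    EqOn (BoxS (fourierLaplace f)) (fourierLaplace fun ξ => boxSymbol ξ * f ξ) (tubeDomain Ω) := by
  intro z hz
  have h01 := ((hf.coord_mul hΩ 1).coord_mul hΩ 0).const_mul (16 * Real.pi ^ 2)
  have h22 := ((hf.coord_mul hΩ 2).coord_mul hΩ 2).const_mul (-(4 * Real.pi ^ 2))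
  calc BoxS (fourierLaplace f) z
      = fourierLaplace (fun ξ => 16 * Real.pi ^ 2 * (ξ 0 * (ξ 1 * f ξ))) z +
          fourierLaplace (fun ξ => -(4 * Real.pi ^ 2) * (ξ 2 * (ξ 2 * f ξ))) z := by
        rw [BoxS, hf.pd_pd_fourierLaplace hΩ hz, hf.pd_pd_fourierLaplace hΩ hz,
          fourierLaplace_const_mul, fourierLaplace_const_mul]
        ring
    _ = fourierLaplace (fun ξ => boxSymbol ξ * f ξ) z := by
        rw [← fourierLaplace_add h01 h22 hz]
        congr 1 with ξ
        simp only [boxSymbol]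
        push_cast
        ring

lemma LaplaceIntegrable.iterate_boxS_eqOn (hf : LaplaceIntegrable Ω f) (hΩ : IsOpen Ω)
    {F : (Fin 3 → ℂ) → ℂ} (hF : EqOn F (fourierLaplace f) (tubeDomain Ω)) (m : ℕ) :
    EqOn (BoxS^[m] F) (fourierLaplace fun ξ => boxSymbol ξ ^ m * f ξ) (tubeDomain Ω) := by
  induction m with
  | zero => simpa only [Function.iterate_zero, id, pow_zero, one_mul] using hF
  | succ m ih =>
    rw [Function.iterate_succ_apply']
    simp only [pow_succ', mul_assoc]
    exact (boxS_congr_of_eqOn (isOpen_tubeDomain hΩ) ih).trans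
      ((hf.boxSymbol_pow_mul hΩ m).boxS_fourierLaplace hΩ)

end BoxOperator

section ContourShift

lemma hasDerivAt_intervalIntegral_horizontal_shift {k : ℂ → ℂ}
    (hk : DifferentiableOn ℂ k {w | w.im ∈ Icc (0 : ℝ) 1}) :
    HasDerivAt (fun r : ℝ => ∫ t in (0 : ℝ)..1, k (r + t * I)) (-I * (k I - k 0)) 0 := by
  have hcont (t : ℝ) (ht : t ∈ Icc (0 : ℝ) 1) : Continuous fun u : ℝ => k (u + t * I) :=
    hk.continuousOn.comp_continuous (by fun_prop) fun u => by simpa using ht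
  have hrect (r : ℝ) : ∫ t in (0 : ℝ)..1, k (r + t * I) = (∫ t in (0 : ℝ)..1, k (t * I)) +
      -I * ((∫ u in (0 : ℝ)..r, k (u + (1 : ℝ) * I)) - ∫ u in (0 : ℝ)..r, k (u + (0 : ℝ) * I)) := by
    have h := integral_boundary_rect_eq_zero_of_differentiableOn k 0 (r + (1 : ℝ) * I)
      (hk.mono fun w hw => by simpa using hw.2)
    simp only [zero_re, zero_im, add_re, ofReal_re, mul_re, I_re, I_im, ofReal_im, add_im, mul_im,
      mul_zero, mul_one, zero_mul, sub_zero, add_zero, zero_add, smul_eq_mul, ofReal_zero] at h ⊢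
    linear_combination (-I) * h +
      ((∫ t in (0 : ℝ)..1, k (r + t * I)) - ∫ t in (0 : ℝ)..1, k (t * I)) * I_mul_I
  have hderiv (t : ℝ) (ht : t ∈ Icc (0 : ℝ) 1) :
      HasDerivAt (fun r : ℝ => ∫ u in (0 : ℝ)..r, k (u + t * I)) (k ((0 : ℝ) + t * I)) 0 :=
    ((hcont t ht).integral_hasStrictDerivAt 0 0).hasDerivAt
  simp only [hrect]
  simpa using (((hderiv 1 (by simp)).sub (hderiv 0 (by simp))).const_mul (-I)).const_add
    (∫ t in (0 : ℝ)..1, k (t * I))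

lemma integral_hasLineDerivAt_eq_zero {E : Type*} [NormedAddCommGroup E] [NormedSpace ℝ E]
    [FiniteDimensional ℝ E] [MeasurableSpace E] [BorelSpace E] {μ : Measure E}
    [μ.IsAddHaarMeasure] {Φ Φ' : E → ℂ} {v : E} (hΦ : Integrable Φ μ) (hΦ' : Integrable Φ' μ)
    (hderiv : ∀ x, HasLineDerivAt ℝ Φ (Φ' x) x v) : ∫ x, Φ' x ∂μ = 0 := by
  have h := integral_bilinear_hasLineDerivAt_right_eq_neg_left_of_integrable (μ := μ)
    (g := fun _ => (1 : ℂ)) (g' := fun _ => 0) (B := ContinuousLinearMap.mul ℝ ℂ)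
    (by simpa using hΦ') (by simp) (by simpa using hΦ) (fun x _ => hderiv x)
    (fun x _ => hasDerivAt_const _ _)
  simpa using h

variable {ι : Type*} {Ω : Set (ι → ℝ)} {H : (ι → ℂ) → ℂ} {y v : ι → ℝ}

lemma continuous_comp_tubePoint (hH : ContinuousOn H (tubeDomain Ω)) (hy : y ∈ Ω) :
    Continuous fun x => H (tubePoint x y) :=
  hH.comp_continuous (by fun_prop) fun x => tubePoint_mem_tubeDomain hy x

lemma hasLineDerivAt_intervalIntegral_tubePoint [Finite ι]
    (hH : DifferentiableOn ℂ H (tubeDomain Ω))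
    (hseg : ∀ t ∈ Icc (0 : ℝ) 1, y + t • v ∈ Ω) (x : ι → ℝ) :
    HasLineDerivAt ℝ (fun x => ∫ t in (0 : ℝ)..1, H (tubePoint x (y + t • v)))
      (-I * (H (tubePoint x (y + v)) - H (tubePoint x y))) x v := by
  cases nonempty_fintype ι
  let k : ℂ → ℂ := fun w => H (tubePoint x y + w • fun i => (v i : ℂ))
  have hk (w : ℂ) : k w = H (tubePoint (x + w.re • v) (y + w.im • v)) := by
    rw [tubePoint_add_smul]
  have hkdiff : DifferentiableOn ℂ k {w | w.im ∈ Icc (0 : ℝ) 1} := by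
    refine hH.comp (by fun_prop) fun w hw => ?_
    rw [← tubePoint_add_smul]
    exact tubePoint_mem_tubeDomain (hseg _ hw) _
  simpa [HasLineDerivAt, hk] using hasDerivAt_intervalIntegral_horizontal_shift hkdiff

variable [Fintype ι]

lemma integrable_prod_comp_tubePoint_segment (hH : ContinuousOn H (tubeDomain Ω))
    (hseg : ∀ t ∈ Icc (0 : ℝ) 1, y + t • v ∈ Ω) {M : ℝ≥0∞} (hM : M ≠ ⊤)
    (hbound : ∀ t ∈ Icc (0 : ℝ) 1, ∫⁻ x, ‖H (tubePoint x (y + t • v))‖ₑ ≤ M) :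
    Integrable (fun p : (ι → ℝ) × ℝ => H (tubePoint p.1 (y + p.2 • v)))
      (volume.prod (volume.restrict (Ioc 0 1))) := by
  have hmeas : AEStronglyMeasurable (fun p : (ι → ℝ) × ℝ => H (tubePoint p.1 (y + p.2 • v)))
      (volume.prod (volume.restrict (Ioc 0 1))) := by
    rw [← Measure.restrict_univ (μ := (volume : Measure (ι → ℝ))), Measure.prod_restrict]
    refine ContinuousOn.aestronglyMeasurable (hH.comp ?_ ?_)
      (MeasurableSet.univ.prod measurableSet_Ioc)
    · exact (by fun_prop : Continuous fun p : (ι → ℝ) × ℝ =>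
        tubePoint p.1 (y + p.2 • v)).continuousOn
    · exact fun p hp => tubePoint_mem_tubeDomain (hseg p.2 (Ioc_subset_Icc_self hp.2)) p.1
  refine ⟨hmeas, ?_⟩
  rw [HasFiniteIntegral, lintegral_prod_symm _ hmeas.enorm]
  calc ∫⁻ t in Ioc (0 : ℝ) 1, ∫⁻ x, ‖H (tubePoint x (y + t • v))‖ₑ
      ≤ ∫⁻ _ in Ioc (0 : ℝ) 1, M :=
        setLIntegral_mono' measurableSet_Ioc fun t ht => hbound t (Ioc_subset_Icc_self ht)
    _ < ⊤ := by simpa using hM.lt_top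

lemma integral_tubePoint_add_eq (hH : DifferentiableOn ℂ H (tubeDomain Ω))
    (hseg : ∀ t ∈ Icc (0 : ℝ) 1, y + t • v ∈ Ω) {M : ℝ≥0∞} (hM : M ≠ ⊤)
    (hbound : ∀ t ∈ Icc (0 : ℝ) 1, ∫⁻ x, ‖H (tubePoint x (y + t • v))‖ₑ ≤ M) :
    ∫ x, H (tubePoint x (y + v)) = ∫ x, H (tubePoint x y) := by
  have hslice (t : ℝ) (ht : t ∈ Icc (0 : ℝ) 1) :
      Integrable fun x => H (tubePoint x (y + t • v)) :=
    ⟨(continuous_comp_tubePoint hH.continuousOn (hseg t ht)).aestronglyMeasurable,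
      (hbound t ht).trans_lt hM.lt_top⟩
  have h0 : Integrable fun x => H (tubePoint x y) := by simpa using hslice 0 (by simp)
  have h1 : Integrable fun x => H (tubePoint x (y + v)) := by simpa using hslice 1 (by simp)
  have hΦ : Integrable fun x => ∫ t in (0 : ℝ)..1, H (tubePoint x (y + t • v)) := by
    simp only [intervalIntegral.integral_of_le zero_le_one]
    exact (integrable_prod_comp_tubePoint_segment hH.continuousOn hseg hM
      hbound).integral_prod_left
  have hzero := integral_hasLineDerivAt_eq_zero hΦ ((h1.sub h0).const_mul (-I))
    (hasLineDerivAt_intervalIntegral_tubePoint hH hseg)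
  rw [integral_const_mul] at hzero
  exact sub_eq_zero.1 ((integral_sub h1 h0).symm.trans
    ((mul_eq_zero.1 hzero).resolve_left (neg_ne_zero.2 I_ne_zero)))

end ContourShift

section HardySpectrum

variable {ι : Type*} [Fintype ι] {Ω : Set (ι → ℝ)} {F : (ι → ℂ) → ℂ} {N : ℝ≥0∞}

/-- `F` belongs to the Hardy space `H²` of the tube over `Ω`, with squared norm at most `N`. -/
structure IsHardyBounded (Ω : Set (ι → ℝ)) (N : ℝ≥0∞) (F : (ι → ℂ) → ℂ) : Prop where
  differentiableOn : DifferentiableOn ℂ F (tubeDomain Ω)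
  ne_top : N ≠ ⊤
  lintegral_le : ∀ y ∈ Ω, ∫⁻ x, ‖F (tubePoint x y)‖ₑ ^ 2 ≤ N

lemma IsHardyBounded.memLp (hF : IsHardyBounded Ω N F) {y : ι → ℝ} (hy : y ∈ Ω) :
    MemLp (fun x => F (tubePoint x y)) 2 :=
  memLp_two_of_lintegral_enorm_sq_le
    (continuous_comp_tubePoint hF.differentiableOn.continuousOn hy).aestronglyMeasurable hF.ne_top
    (hF.lintegral_le y hy)

/-- The Fourier transform of the slice `F (· + iy)`, reweighted by `exp (2π ⟨y, ξ⟩)`. By Cauchy's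
theorem it does not depend on `y`, so it is the frequency side of `F`. -/
def IsHardyBounded.spectrum (hF : IsHardyBounded Ω N F) {y : ι → ℝ} (hy : y ∈ Ω) (ξ : ι → ℝ) : ℂ :=
  expWeight (-y) ξ * fourierL2 (hF.memLp hy) ξ

lemma mul_le_sq_add_sq_ennreal (a b : ℝ≥0∞) : a * b ≤ a ^ 2 + b ^ 2 := by
  rcases le_total a b with hab | hba
  · exact ((mul_le_mul_left hab b).trans_eq (sq b).symm).trans le_add_self
  · exact ((mul_le_mul_right hba a).trans_eq (sq a).symm).trans le_self_add

lemma contDiff_expWeight (y : ι → ℝ) : ContDiff ℝ ∞ (expWeight y) := by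
  unfold expWeight dotProduct
  fun_prop

lemma expWeight_add_smul_le (y v ξ : ι → ℝ) {t : ℝ} (ht : t ∈ Icc (0 : ℝ) 1) :
    expWeight (y + t • v) ξ ≤ expWeight y ξ + expWeight (y + v) ξ := by
  have hconv := convexOn_exp.2 (mem_univ (-2 * Real.pi * (y ⬝ᵥ ξ)))
    (mem_univ (-2 * Real.pi * ((y + v) ⬝ᵥ ξ))) (sub_nonneg.2 ht.2) ht.1 (sub_add_cancel 1 t)
  have hexp : expWeight (y + t • v) ξ ≤ (1 - t) * expWeight y ξ + t * expWeight (y + v) ξ := by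
    refine Eq.trans_le ?_ hconv
    simp only [expWeight, add_dotProduct, smul_dotProduct, smul_eq_mul]
    ring_nf
  nlinarith [expWeight_pos y ξ, expWeight_pos (y + v) ξ, ht.1, ht.2]

lemma laplaceIntegrable_univ_of_hasCompactSupport {φ : (ι → ℝ) → ℝ} (hφ : Continuous φ)
    (hφc : HasCompactSupport φ) : LaplaceIntegrable univ fun ξ => (φ ξ : ℂ) := fun y _ =>
  (by fun_prop : Continuous fun ξ => (expWeight y ξ : ℂ) * φ ξ).integrable_of_hasCompactSupport
    (hφc.comp_left (g := ofReal) rfl).mul_left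

lemma exists_lintegral_enorm_fourierLaplace_segment_le {φ : (ι → ℝ) → ℝ} (hφ : Continuous φ)
    (hφc : HasCompactSupport φ) (y v : ι → ℝ) :
    ∃ K : ℝ≥0∞, K ≠ ⊤ ∧ ∀ t ∈ Icc (0 : ℝ) 1,
      ∫⁻ x, ‖fourierLaplace (fun ξ => φ ξ) (-tubePoint x (y + t • v))‖ₑ ^ 2 ≤ K := by
  let B : (ι → ℝ) → ℂ := fun ξ => ((expWeight (-y) ξ + expWeight (-y + -v) ξ : ℝ) : ℂ) * φ ξ
  have hB : MemLp B 2 := (by fun_prop : Continuous B).memLp_of_hasCompactSupport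
    (hφc.comp_left (g := ofReal) rfl).mul_left
  refine ⟨∫⁻ ξ, ‖B ξ‖ₑ ^ 2, ?_, fun t ht => ?_⟩
  · rw [lintegral_enorm_sq_eq_eLpNorm_sq]
    exact ENNReal.pow_ne_top hB.eLpNorm_ne_top
  calc ∫⁻ x, ‖fourierLaplace (fun ξ => φ ξ) (-tubePoint x (y + t • v))‖ₑ ^ 2
      = ∫⁻ x, ‖fourierLaplace (fun ξ => φ ξ) (tubePoint x (-(y + t • v)))‖ₑ ^ 2 := by
        simp only [neg_tubePoint]
        exact lintegral_neg_eq_self fun x =>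
          ‖fourierLaplace (fun ξ => φ ξ) (tubePoint x (-(y + t • v)))‖ₑ ^ 2
    _ ≤ ∫⁻ ξ, ‖(expWeight (-(y + t • v)) ξ : ℂ) * φ ξ‖ₑ ^ 2 :=
        lintegral_enorm_fourierLaplace_sq_le
          (laplaceIntegrable_univ_of_hasCompactSupport hφ hφc _ (mem_univ _))
    _ ≤ ∫⁻ ξ, ‖B ξ‖ₑ ^ 2 := by
        gcongr with ξ
        have hle := expWeight_add_smul_le (-y) (-v) ξ ht
        rw [smul_neg, ← neg_add] at hle
        rw [enorm_le_iff_norm_le, norm_mul, norm_mul, norm_real, norm_real,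
          Real.norm_of_nonneg (expWeight_pos _ _).le]
        gcongr
        exact (hle.trans (Real.le_norm_self _)).trans_eq (norm_real _).symm

lemma IsHardyBounded.integral_fourierLaplace_mul_eq (hF : IsHardyBounded Ω N F)
    (hΩ : Convex ℝ Ω) {φ : (ι → ℝ) → ℝ} (hφ : Continuous φ) (hφc : HasCompactSupport φ)
    {y y' : ι → ℝ} (hy : y ∈ Ω) (hy' : y' ∈ Ω) :
    ∫ x, fourierLaplace (fun ξ => φ ξ) (-tubePoint x y) * F (tubePoint x y) =
      ∫ x, fourierLaplace (fun ξ => φ ξ) (-tubePoint x y') * F (tubePoint x y') := by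
  set ψ : (ι → ℂ) → ℂ := fun z => fourierLaplace (fun ξ => φ ξ) (-z)
  have hψ : Differentiable ℂ ψ := by
    have h := (laplaceIntegrable_univ_of_hasCompactSupport hφ hφc).differentiableOn_fourierLaplace
      isOpen_univ
    exact (differentiableOn_univ.1 h).comp differentiable_id.neg
  obtain ⟨K, hK, hψK⟩ := exists_lintegral_enorm_fourierLaplace_segment_le hφ hφc y (y' - y)
  have hseg (t : ℝ) (ht : t ∈ Icc (0 : ℝ) 1) : y + t • (y' - y) ∈ Ω :=
    hΩ.add_smul_sub_mem hy hy' ht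
  have hbound (t : ℝ) (ht : t ∈ Icc (0 : ℝ) 1) :
      ∫⁻ x, ‖ψ (tubePoint x (y + t • (y' - y))) * F (tubePoint x (y + t • (y' - y)))‖ₑ ≤ K + N := by
    have hcont : Continuous fun x => ψ (tubePoint x (y + t • (y' - y))) :=
      hψ.continuous.comp (by fun_prop)
    refine le_trans ?_ (add_le_add (hψK t ht) (hF.lintegral_le _ (hseg t ht)))
    rw [← lintegral_add_left (hcont.measurable.enorm.pow_const 2)]
    gcongr with x
    rw [enorm_mul]
    exact mul_le_sq_add_sq_ennreal _ _
  have hshift := integral_tubePoint_add_eq (H := fun z => ψ z * F z)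
    (hψ.differentiableOn.mul hF.differentiableOn) hseg (ENNReal.add_ne_top.2 ⟨hK, hF.ne_top⟩) hbound
  simpa only [add_sub_cancel] using hshift.symm

lemma IsHardyBounded.integral_smul_spectrum (hF : IsHardyBounded Ω N F) {φ : (ι → ℝ) → ℝ}
    (hφ : ContDiff ℝ ∞ φ) (hφc : HasCompactSupport φ) {y : ι → ℝ} (hy : y ∈ Ω) :
    ∫ ξ, φ ξ • hF.spectrum hy ξ =
      ∫ x, fourierLaplace (fun ξ => φ ξ) (-tubePoint x y) * F (tubePoint x y) := by
  have h := integral_smul_fourierL2 (hF.memLp hy) ((contDiff_expWeight (-y)).mul hφ)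
    (hφc.mul_left (f := expWeight (-y)))
  simp only [neg_tubePoint, fourierLaplace_tubePoint (fun ξ => (φ ξ : ℂ)) _ (-y)]
  simp only [ofReal_mul, real_smul] at h ⊢
  rw [← h]
  congr 1 with ξ
  rw [spectrum]
  ring

lemma IsHardyBounded.measurable_spectrum (hF : IsHardyBounded Ω N F) {y : ι → ℝ} (hy : y ∈ Ω) :
    Measurable (hF.spectrum hy) :=
  (by fun_prop : Continuous fun ξ => (expWeight (-y) ξ : ℂ)).measurable.mul
    (measurable_fourierL2 _)

lemma IsHardyBounded.locallyIntegrable_spectrum (hF : IsHardyBounded Ω N F) {y : ι → ℝ}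
    (hy : y ∈ Ω) : LocallyIntegrable (hF.spectrum hy) :=
  ((memLp_fourierL2 (hF.memLp hy)).locallyIntegrable one_le_two).continuous_mul
    (by fun_prop : Continuous fun ξ => (expWeight (-y) ξ : ℂ))

lemma IsHardyBounded.spectrum_ae_eq (hF : IsHardyBounded Ω N F) (hΩ : Convex ℝ Ω)
    {y y' : ι → ℝ} (hy : y ∈ Ω) (hy' : y' ∈ Ω) :
    hF.spectrum hy =ᵐ[volume] hF.spectrum hy' :=
  ae_eq_of_integral_contDiff_smul_eq (hF.locallyIntegrable_spectrum hy)
    (hF.locallyIntegrable_spectrum hy') fun φ hφ hφc => by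
      rw [hF.integral_smul_spectrum hφ hφc hy, hF.integral_smul_spectrum hφ hφc hy',
        hF.integral_fourierLaplace_mul_eq hΩ hφ.continuous hφc hy hy']

lemma IsHardyBounded.expWeight_mul_spectrum_ae_eq (hF : IsHardyBounded Ω N F) (hΩ : Convex ℝ Ω)
    {y e : ι → ℝ} (hy : y ∈ Ω) (he : e ∈ Ω) :
    (fun ξ => expWeight y ξ * hF.spectrum he ξ) =ᵐ[volume] fourierL2 (hF.memLp hy) := by
  filter_upwards [hF.spectrum_ae_eq hΩ he hy] with ξ hξ
  rw [hξ, spectrum, ← mul_assoc, ← ofReal_mul, expWeight_mul_neg, ofReal_one, one_mul]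

lemma IsHardyBounded.lintegral_enorm_expWeight_mul_spectrum_sq_le (hF : IsHardyBounded Ω N F)
    (hΩ : Convex ℝ Ω) {e : ι → ℝ} (he : e ∈ Ω) :
    ∀ y ∈ Ω, ∫⁻ ξ, ‖expWeight y ξ * hF.spectrum he ξ‖ₑ ^ 2 ≤ N := fun y hy =>
  calc ∫⁻ ξ, ‖expWeight y ξ * hF.spectrum he ξ‖ₑ ^ 2
      = ∫⁻ ξ, ‖fourierL2 (hF.memLp hy) ξ‖ₑ ^ 2 :=
        lintegral_congr_ae ((hF.expWeight_mul_spectrum_ae_eq hΩ hy he).mono fun _ hξ =>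
          congrArg (‖·‖ₑ ^ 2) hξ)
    _ = ∫⁻ x, ‖F (tubePoint x y)‖ₑ ^ 2 := lintegral_enorm_fourierL2_sq _
    _ ≤ N := hF.lintegral_le y hy

lemma IsHardyBounded.eqOn_fourierLaplace (hF : IsHardyBounded Ω N F) (hΩ : IsOpen Ω)
    (hconv : Convex ℝ Ω) {e : ι → ℝ} (he : e ∈ Ω) {f : (ι → ℝ) → ℂ}
    (hfs : f =ᵐ[volume] hF.spectrum he) (hf : LaplaceIntegrable Ω f) :
    EqOn F (fourierLaplace f) (tubeDomain Ω) := by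
  intro z hz
  set y : ι → ℝ := fun i => (z i).im
  have hslice : (fun ξ => expWeight y ξ * f ξ) =ᵐ[volume] fourierL2 (hF.memLp hz) := by
    filter_upwards [hfs, hF.expWeight_mul_spectrum_ae_eq hconv hz he] with ξ hξ hξ'
    rw [hξ, hξ']
  have hae : (fun x => F (tubePoint x y)) =ᵐ[volume] fun x => fourierLaplace f (tubePoint x y) := by
    filter_upwards [ae_eq_fourierLaplace_fourierL2 (hF.memLp hz) ((hf y hz).congr hslice)] with x hx
    rw [hx, fourierLaplace_tubePoint f]
    exact integral_congr_ae (hslice.symm.mono fun ξ hξ => congrArg _ hξ)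
  have heq := ((continuous_comp_tubePoint hF.differentiableOn.continuousOn hz).ae_eq_iff_eq volume
    (continuous_comp_tubePoint (hf.differentiableOn_fourierLaplace hΩ).continuousOn hz)).1 hae
  simpa only [y, tubePoint_re_im] using congrFun heq fun i => (z i).re

end HardySpectrum

section PaleyWiener

variable {ι : Type*} [Fintype ι]

/-- The closed cone of all `ξ` with `0 ≤ ⟨y, ξ⟩` for every `y ∈ Ω`. -/
def dualCone (Ω : Set (ι → ℝ)) : PointedCone ℝ (ι → ℝ) :=
  PointedCone.dual (dotProductBilin ℝ ℝ) Ω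

lemma mem_dualCone {Ω : Set (ι → ℝ)} {ξ : ι → ℝ} : ξ ∈ dualCone Ω ↔ ∀ y ∈ Ω, 0 ≤ y ⬝ᵥ ξ :=
  Iff.rfl

lemma isClosed_dualCone (Ω : Set (ι → ℝ)) : IsClosed (dualCone Ω : Set (ι → ℝ)) := by
  have hinter : (dualCone Ω : Set (ι → ℝ)) = ⋂ y ∈ Ω, {ξ | 0 ≤ y ⬝ᵥ ξ} := by
    ext ξ
    simp only [SetLike.mem_coe, mem_dualCone, mem_iInter, mem_ofPred_eq]
  rw [hinter]
  exact isClosed_biInter fun y _ => isClosed_le continuous_const (by fun_prop)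

lemma exists_mul_sum_abs_le_dotProduct {Ω : Set (ι → ℝ)} (hΩ : IsOpen Ω) {y : ι → ℝ}
    (hy : y ∈ Ω) : ∃ s > 0, ∀ ξ ∈ dualCone Ω, s * ∑ i, |ξ i| ≤ y ⬝ᵥ ξ := by
  obtain ⟨s, hs, hmem⟩ := exists_forall_sub_mul_sign_mem hΩ hy
  refine ⟨s, hs, fun ξ hξ => ?_⟩
  have h := mem_dualCone.1 hξ _ (hmem fun i => SignType.sign (ξ i))
  simpa only [dotProduct, sub_mul, mul_assoc, sign_mul_self, Finset.sum_sub_distrib,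
    ← Finset.mul_sum, sub_nonneg] using h

lemma integrable_exp_neg_mul_abs {c : ℝ} (hc : 0 < c) :
    Integrable fun x : ℝ => Real.exp (-(c * |x|)) := by
  refine Integrable.of_integral_ne_zero ?_
  have h := integral_exp_mul_Ioi (neg_lt_zero.2 hc) 0
  rw [integral_comp_abs (f := fun x => Real.exp (-(c * x)))]
  simp only [neg_mul, mul_zero, Real.exp_zero] at h
  rw [h, neg_div_neg_eq]
  positivity

lemma integrable_exp_neg_mul_sum_abs {c : ℝ} (hc : 0 < c) :
    Integrable fun ξ : ι → ℝ => Real.exp (-(c * ∑ i, |ξ i|)) := by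
  simp only [Finset.mul_sum, ← Finset.sum_neg_distrib, Real.exp_sum]
  exact Integrable.fintype_prod fun _ => integrable_exp_neg_mul_abs hc

lemma memLp_indicator_dualCone_expWeight {Ω : Set (ι → ℝ)} (hΩ : IsOpen Ω) {y : ι → ℝ}
    (hy : y ∈ Ω) : MemLp ((dualCone Ω : Set (ι → ℝ)).indicator (expWeight y)) 2 := by
  obtain ⟨s, hs, hle⟩ := exists_mul_sum_abs_le_dotProduct hΩ hy
  have hmeas : AEStronglyMeasurable ((dualCone Ω : Set (ι → ℝ)).indicator (expWeight y)) :=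
    (continuous_expWeight y).aestronglyMeasurable.indicator (isClosed_dualCone Ω).measurableSet
  refine (memLp_two_iff_integrable_sq hmeas).2 ((integrable_exp_neg_mul_sum_abs
    (by positivity : 0 < 4 * Real.pi * s)).mono' (hmeas.pow 2) (ae_of_all _ fun ξ => ?_))
  by_cases hξ : ξ ∈ (dualCone Ω : Set (ι → ℝ))
  · rw [indicator_of_mem hξ, Real.norm_of_nonneg (sq_nonneg _), expWeight, ← Real.exp_nat_mul,
      Real.exp_le_exp]
    push_cast
    nlinarith [hle ξ hξ, Real.pi_pos]
  · rw [indicator_of_notMem hξ]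
    simpa using (Real.exp_pos _).le

lemma laplaceIntegrable_of_memLp_two {Ω : Set (ι → ℝ)} (hΩ : IsOpen Ω) {f : (ι → ℝ) → ℂ}
    (hf : MemLp f 2) (hsupp : Function.support f ⊆ dualCone Ω) : LaplaceIntegrable Ω f := by
  intro y hy
  refine ((memLp_indicator_dualCone_expWeight hΩ hy).ofReal.integrable_mul hf).congr
    (ae_of_all _ fun ξ => ?_)
  by_cases hξ : ξ ∈ (dualCone Ω : Set (ι → ℝ))
  · simp [indicator_of_mem hξ]
  · simp [Function.notMem_support.1 fun h => hξ (hsupp h)]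

variable {C : ConvexCone ℝ (ι → ℝ)} {g : (ι → ℝ) → ℂ} {N : ℝ≥0∞}

lemma measurable_enorm_expWeight_mul_sq (hg : Measurable g) (y : ι → ℝ) :
    Measurable fun ξ => ‖expWeight y ξ * g ξ‖ₑ ^ 2 := by
  fun_prop

lemma enorm_expWeight_mul_sq (y ξ : ι → ℝ) (w : ℂ) :
    ‖expWeight y ξ * w‖ₑ ^ 2 = ENNReal.ofReal (Real.exp (-4 * Real.pi * (y ⬝ᵥ ξ))) * ‖w‖ₑ ^ 2 := by
  rw [enorm_mul, mul_pow, ← ofReal_norm (expWeight y ξ : ℂ), norm_real,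
    Real.norm_of_nonneg (expWeight_pos _ _).le, ← ENNReal.ofReal_pow (expWeight_pos _ _).le,
    expWeight, ← Real.exp_nat_mul]
  congr 3
  push_cast
  ring

lemma ae_dotProduct_nonneg_of_lintegral_le (hg : Measurable g) (hN : N ≠ ⊤)
    (h : ∀ y ∈ C, ∫⁻ ξ, ‖expWeight y ξ * g ξ‖ₑ ^ 2 ≤ N) {y : ι → ℝ} (hy : y ∈ C) :
    ∀ᵐ ξ, g ξ ≠ 0 → 0 ≤ y ⬝ᵥ ξ := by
  let G : ℕ → (ι → ℝ) → ℝ≥0∞ := fun n ξ => ‖expWeight (((n : ℝ) + 1) • y) ξ * g ξ‖ₑ ^ 2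
  have hG (n : ℕ) : Measurable (G n) := measurable_enorm_expWeight_mul_sq hg _
  have hfin : ∫⁻ ξ, liminf (fun n => G n ξ) atTop ≠ ⊤ :=
    ne_top_of_le_ne_top hN <| (lintegral_liminf_le hG).trans <|
      liminf_le_of_le (by isBoundedDefault) fun b hb =>
        (hb.exists).elim fun n hn => hn.trans (h _ (C.smul_mem n.cast_add_one_pos hy))
  filter_upwards [ae_lt_top (.liminf hG) hfin] with ξ hξ hgξ
  by_contra! hneg
  refine hξ.ne (Tendsto.liminf_eq ?_)
  have hlin : Tendsto (fun n : ℕ => -4 * Real.pi * (((n : ℝ) + 1) • y ⬝ᵥ ξ)) atTop atTop := by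
    have hpos : 0 < -4 * Real.pi * (y ⬝ᵥ ξ) := by nlinarith [Real.pi_pos]
    convert (tendsto_atTop_add_const_right atTop (1 : ℝ)
      tendsto_natCast_atTop_atTop).const_mul_atTop hpos using 2 with n
    rw [smul_dotProduct, smul_eq_mul]
    ring
  simp only [G, enorm_expWeight_mul_sq]
  have hne : ‖g ξ‖ₑ ^ 2 ≠ 0 := pow_ne_zero 2 (enorm_ne_zero.2 hgξ)
  exact ENNReal.top_mul hne ▸ ENNReal.Tendsto.mul_const
    (ENNReal.tendsto_ofReal_atTop.comp (Real.tendsto_exp_atTop.comp hlin))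
    (.inl ENNReal.top_ne_zero)

lemma ae_mem_dualCone_of_lintegral_le (hg : Measurable g) (hN : N ≠ ⊤)
    (h : ∀ y ∈ C, ∫⁻ ξ, ‖expWeight y ξ * g ξ‖ₑ ^ 2 ≤ N) :
    ∀ᵐ ξ, g ξ ≠ 0 → ξ ∈ dualCone (C : Set (ι → ℝ)) := by
  obtain ⟨D, hDC, hD, hdense⟩ :=
    (TopologicalSpace.IsSeparable.of_separableSpace (C : Set (ι → ℝ))).exists_countable_dense_subset
  filter_upwards [(ae_ball_iff hD).2 fun y hy =>
    ae_dotProduct_nonneg_of_lintegral_le hg hN h (hDC hy)] with ξ hξ hgξ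
  have hclosed : IsClosed {y | 0 ≤ y ⬝ᵥ ξ} := isClosed_le continuous_const (by fun_prop)
  exact fun y hy => closure_minimal (fun y hy => hξ y hy hgξ) hclosed (hdense hy)

lemma lintegral_enorm_sq_le_of_forall_expWeight (hne : (C : Set (ι → ℝ)).Nonempty)
    (hg : Measurable g) (h : ∀ y ∈ C, ∫⁻ ξ, ‖expWeight y ξ * g ξ‖ₑ ^ 2 ≤ N) :
    ∫⁻ ξ, ‖g ξ‖ₑ ^ 2 ≤ N := by
  obtain ⟨e, he⟩ := hne
  let G : ℕ → (ι → ℝ) → ℝ≥0∞ := fun n ξ => ‖expWeight ((1 / ((n : ℝ) + 1)) • e) ξ * g ξ‖ₑ ^ 2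
  have hlim (ξ : ι → ℝ) : Tendsto (fun n => G n ξ) atTop (𝓝 (‖g ξ‖ₑ ^ 2)) := by
    have hcont : Continuous fun t : ℝ => ‖(expWeight (t • e) ξ : ℂ) * g ξ‖ₑ ^ 2 := by
      simp only [expWeight, smul_dotProduct]
      fun_prop
    simpa only [zero_smul, expWeight_zero, ofReal_one, one_mul, Function.comp_def] using
      (hcont.tendsto 0).comp (tendsto_one_div_add_atTop_nhds_zero_nat (𝕜 := ℝ))
  calc ∫⁻ ξ, ‖g ξ‖ₑ ^ 2 = ∫⁻ ξ, liminf (fun n => G n ξ) atTop := by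
        simp only [fun ξ => (hlim ξ).liminf_eq]
    _ ≤ liminf (fun n => ∫⁻ ξ, G n ξ) atTop :=
        lintegral_liminf_le fun _ => measurable_enorm_expWeight_mul_sq hg _
    _ ≤ N := liminf_le_of_le (by isBoundedDefault) fun b hb =>
        (hb.exists).elim fun n hn => hn.trans (h _ (C.smul_mem (by positivity) he))

theorem IsHardyBounded.exists_eqOn_fourierLaplace {F : (ι → ℂ) → ℂ} (hC : IsOpen (C : Set (ι → ℝ)))
    (hne : (C : Set (ι → ℝ)).Nonempty) (hF : IsHardyBounded (C : Set (ι → ℝ)) N F) :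
    ∃ f, Measurable f ∧ MemLp f 2 ∧ Function.support f ⊆ dualCone (C : Set (ι → ℝ)) ∧
      EqOn F (fourierLaplace f) (tubeDomain C) ∧ ∫⁻ ξ, ‖f ξ‖ₑ ^ 2 ≤ N := by
  obtain ⟨e, he⟩ := id hne
  have hbound := hF.lintegral_enorm_expWeight_mul_spectrum_sq_le C.convex he
  have hmeas := hF.measurable_spectrum he
  let D : Set (ι → ℝ) := (dualCone (C : Set (ι → ℝ)) : Set (ι → ℝ))
  have hfs : D.indicator (hF.spectrum he) =ᵐ[volume] hF.spectrum he := by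
    filter_upwards [ae_mem_dualCone_of_lintegral_le hmeas hF.ne_top hbound] with ξ hξ
    by_cases hgξ : hF.spectrum he ξ = 0
    · rw [hgξ, indicator_apply_eq_zero.2 fun _ => hgξ]
    · exact indicator_of_mem (hξ hgξ) _
  have hle : ∫⁻ ξ, ‖D.indicator (hF.spectrum he) ξ‖ₑ ^ 2 ≤ N := by
    rw [lintegral_congr_ae (hfs.mono fun _ hξ => congrArg (‖·‖ₑ ^ 2) hξ)]
    exact lintegral_enorm_sq_le_of_forall_expWeight hne hmeas hbound
  have hmeasD : Measurable (D.indicator (hF.spectrum he)) :=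
    hmeas.indicator (isClosed_dualCone _).measurableSet
  have hL2 : MemLp (D.indicator (hF.spectrum he)) 2 :=
    memLp_two_of_lintegral_enorm_sq_le hmeasD.aestronglyMeasurable hF.ne_top hle
  exact ⟨_, hmeasD, hL2, support_indicator_subset, hF.eqOn_fourierLaplace hC C.convex he hfs
    (laplaceIntegrable_of_memLp_two hC hL2 support_indicator_subset), hle⟩

end PaleyWiener

section SphericalCone

/-- The spherical cone `Sigma3` as a convex cone. -/
def sphericalCone : ConvexCone ℝ (Fin 3 → ℝ) where
  carrier := Sigma3
  smul_mem' c hc y hy := by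
    refine ⟨?_, mul_pos hc hy.2⟩
    calc 0 < c ^ 2 * (y 0 * y 1 - y 2 ^ 2) := mul_pos (pow_pos hc 2) hy.1
      _ = (c • y) 0 * (c • y) 1 - (c • y) 2 ^ 2 := by
        simp only [Pi.smul_apply, smul_eq_mul]
        ring
  add_mem' a ha b hb := by
    obtain ⟨hΔa, ha0⟩ := ha
    obtain ⟨hΔb, hb0⟩ := hb
    refine ⟨pos_of_mul_pos_right ?_ (mul_pos ha0 hb0).le, add_pos ha0 hb0⟩
    calc 0 < a 0 * (a 0 + b 0) * (b 0 * b 1 - b 2 ^ 2) +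
          b 0 * (a 0 + b 0) * (a 0 * a 1 - a 2 ^ 2) + (a 0 * b 2 - b 0 * a 2) ^ 2 := by positivity
      _ = a 0 * b 0 * ((a + b) 0 * (a + b) 1 - (a + b) 2 ^ 2) := by
        simp only [Pi.add_apply]
        ring

lemma isOpen_sphericalCone : IsOpen (sphericalCone : Set (Fin 3 → ℝ)) :=
  (isOpen_lt continuous_const (by fun_prop : Continuous fun y : Fin 3 → ℝ => y 0 * y 1 - y 2 ^ 2)
    ).inter (isOpen_lt continuous_const (continuous_apply 0))

lemma snoc_zero_mem_sphericalCone {y : Fin 2 → ℝ} (hy : ∀ i, 0 < y i) :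
    (Fin.snoc y 0 : Fin 3 → ℝ) ∈ sphericalCone := by
  refine ⟨?_, hy 0⟩
  change 0 < y 0 * y 1 - 0 ^ 2
  simpa using mul_pos (hy 0) (hy 1)

lemma quadratic_nonneg_of_mem_dualCone {ξ : Fin 3 → ℝ}
    (hξ : ξ ∈ dualCone (sphericalCone : Set (Fin 3 → ℝ))) (p q : ℝ) :
    0 ≤ p ^ 2 * ξ 0 + q ^ 2 * ξ 1 + p * q * ξ 2 := by
  have hε : ∀ ε > 0, 0 ≤ p ^ 2 * ξ 0 + q ^ 2 * ξ 1 + p * q * ξ 2 + ε * (ξ 0 + ξ 1) := by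
    intro ε hε
    have hmem : ![p ^ 2 + ε, q ^ 2 + ε, p * q] ∈ (sphericalCone : Set (Fin 3 → ℝ)) := by
      refine ⟨?_, add_pos_of_nonneg_of_pos (sq_nonneg p) hε⟩
      calc 0 < ε * (p ^ 2 + q ^ 2 + ε) := by positivity
        _ = (p ^ 2 + ε) * (q ^ 2 + ε) - (p * q) ^ 2 := by ring
    have h := mem_dualCone.1 hξ _ hmem
    simp only [dotProduct, Fin.sum_univ_three, Matrix.cons_val] at h
    linarith
  have hlim : Tendsto (fun ε : ℝ => p ^ 2 * ξ 0 + q ^ 2 * ξ 1 + p * q * ξ 2 + ε * (ξ 0 + ξ 1))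
      (𝓝[>] 0) (𝓝 (p ^ 2 * ξ 0 + q ^ 2 * ξ 1 + p * q * ξ 2 + 0 * (ξ 0 + ξ 1))) :=
    (by fun_prop : Continuous _).continuousWithinAt
  rw [zero_mul, add_zero] at hlim
  exact ge_of_tendsto hlim (eventually_mem_nhdsWithin.mono hε)

lemma sq_le_of_mem_dualCone_sphericalCone {ξ : Fin 3 → ℝ}
    (hξ : ξ ∈ dualCone (sphericalCone : Set (Fin 3 → ℝ))) :
    0 ≤ ξ 0 ∧ 0 ≤ ξ 1 ∧ ξ 2 ^ 2 ≤ 4 * (ξ 0 * ξ 1) := by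
  have hquad := quadratic_nonneg_of_mem_dualCone hξ
  have hdiscrim : discrim (ξ 0) (ξ 2) (ξ 1) ≤ 0 := discrim_le_zero fun p => by
    linarith [hquad p 1]
  exact ⟨by simpa using hquad 1 0, by simpa using hquad 0 1, by rw [discrim] at hdiscrim; linarith⟩

end SphericalCone

section WeightedBergman

/-- The measure `y ^ α dy` on the half-line `y > 0`, the vertical factor of `Vm α`. -/
def powMeasure (α : ℝ) : Measure ℝ :=
  (volume.restrict (Ioi 0)).withDensity fun y => ENNReal.ofReal (y ^ α)

instance (α : ℝ) : SFinite (powMeasure α) := by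
  unfold powMeasure
  infer_instance

instance (α : ℝ) : SFinite (Vm α) := by
  unfold Vm
  infer_instance

lemma ae_powMeasure_pos (α : ℝ) : ∀ᵐ y ∂powMeasure α, 0 < y :=
  (withDensity_absolutelyContinuous _ _).ae_le (ae_restrict_mem measurableSet_Ioi)

lemma ae_mem_UHP (α : ℝ) : ∀ᵐ z ∂Vm α, z ∈ UHP :=
  (withDensity_absolutelyContinuous _ _).ae_le
    (ae_restrict_mem (measurableSet_lt measurable_const measurable_im))

/-- The Laplace transform of `powMeasure α`, an Euler Gamma integral. -/
def powLaplace (α r : ℝ) : ℝ≥0∞ :=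
  ∫⁻ y, ENNReal.ofReal (Real.exp (-(r * y))) ∂powMeasure α

lemma powLaplace_eq {α r : ℝ} (hα : -1 < α) (hr : 0 < r) :
    powLaplace α r = ENNReal.ofReal ((1 / r) ^ (α + 1) * Real.Gamma (α + 1)) := by
  have hα' : 0 < α + 1 := by linarith
  have h := Real.integral_rpow_mul_exp_neg_mul_Ioi hα' hr
  rw [add_sub_cancel_right] at h
  have hint : IntegrableOn (fun y : ℝ => y ^ α * Real.exp (-(r * y))) (Ioi 0) :=
    Integrable.of_integral_ne_zero (by
      rw [h]
      exact (mul_pos (by positivity) (Real.Gamma_pos_of_pos hα')).ne')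
  have hnonneg : ∀ᵐ y ∂volume.restrict (Ioi (0 : ℝ)), 0 ≤ y ^ α * Real.exp (-(r * y)) :=
    (ae_restrict_mem measurableSet_Ioi).mono fun y (hy : 0 < y) => by positivity
  rw [← h, ofReal_integral_eq_lintegral_ofReal hint hnonneg, powLaplace, powMeasure,
    lintegral_withDensity_eq_lintegral_mul _ (by fun_prop) (by fun_prop)]
  exact setLIntegral_congr_fun measurableSet_Ioi fun y hy =>
    (ENNReal.ofReal_mul (Real.rpow_nonneg (le_of_lt hy) _)).symm

lemma lintegral_Vm (α : ℝ) {φ : ℂ → ℝ≥0∞} (hφ : Measurable φ) :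
    ∫⁻ z, φ z ∂Vm α = ∫⁻ y, (∫⁻ x : ℝ, φ (x + y * I)) ∂powMeasure α := by
  let w : ℂ → ℝ≥0∞ := fun z => ENNReal.ofReal (z.im ^ α)
  have hw : Measurable w := by fun_prop
  have hpre : measurableEquivRealProd.symm ⁻¹' UHP = univ ×ˢ Ioi 0 := by
    ext p
    simp [UHP]
  have hpoint (x y : ℝ) : measurableEquivRealProd.symm (x, y) = x + y * I := by
    apply Complex.ext <;> simp
  have hmeas : Measurable fun p : ℝ × ℝ => (w * φ) (measurableEquivRealProd.symm p) :=
    (hw.mul hφ).comp measurableEquivRealProd.symm.measurable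
  calc ∫⁻ z, φ z ∂Vm α = ∫⁻ z in UHP, (w * φ) z := lintegral_withDensity_eq_lintegral_mul _ hw hφ
    _ = ∫⁻ p in univ ×ˢ Ioi 0, (w * φ) (measurableEquivRealProd.symm p) := by
        rw [← hpre]
        exact (volume_preserving_equiv_real_prod.symm.setLIntegral_comp_preimage_emb
          measurableEquivRealProd.symm.measurableEmbedding _ _).symm
    _ = ∫⁻ y in Ioi (0 : ℝ), ∫⁻ x : ℝ, (w * φ) (x + y * I) := by
        rw [Measure.volume_eq_prod, ← Measure.prod_restrict, Measure.restrict_univ,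
          lintegral_prod_symm _ hmeas.aemeasurable]
        simp only [hpoint]
    _ = ∫⁻ y in Ioi (0 : ℝ), ENNReal.ofReal (y ^ α) * ∫⁻ x : ℝ, φ (x + y * I) := by
        simp [w, lintegral_const_mul' _ _ ENNReal.ofReal_ne_top]
    _ = ∫⁻ y, (∫⁻ x : ℝ, φ (x + y * I)) ∂powMeasure α := by
        have hline : Measurable fun y : ℝ => ∫⁻ x : ℝ, φ (x + y * I) :=
          Measurable.lintegral_prod_right (by fun_prop)
        have hpow : Measurable fun y : ℝ => ENNReal.ofReal (y ^ α) := by fun_prop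
        exact (lintegral_withDensity_eq_lintegral_mul (volume.restrict (Ioi 0)) hpow hline).symm

lemma lintegral_Vm_prod (α β : ℝ) {Φ : ℂ × ℂ → ℝ≥0∞} (hΦ : Measurable Φ) :
    ∫⁻ p, Φ p ∂(Vm α).prod (Vm β) =
      ∫⁻ y, (∫⁻ x : ℝ × ℝ, Φ (x.1 + y.1 * I, x.2 + y.2 * I))
        ∂(powMeasure α).prod (powMeasure β) := by
  let Ψ (y₁ y₂ x₁ x₂ : ℝ) : ℝ≥0∞ := Φ (x₁ + y₁ * I, x₂ + y₂ * I)
  have hΨ : Measurable fun p : (ℝ × ℝ) × (ℝ × ℝ) => Ψ p.1.1 p.1.2 p.2.1 p.2.2 := by fun_prop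
  have hswap (y₁ : ℝ) : ∫⁻ x₁, ∫⁻ y₂, (∫⁻ x₂, Ψ y₁ y₂ x₁ x₂) ∂powMeasure β =
      ∫⁻ y₂, (∫⁻ x₁, ∫⁻ x₂, Ψ y₁ y₂ x₁ x₂) ∂powMeasure β :=
    lintegral_lintegral_swap (Measurable.lintegral_prod_right (by fun_prop)).aemeasurable
  have hplane (y₁ y₂ : ℝ) : ∫⁻ x : ℝ × ℝ, Ψ y₁ y₂ x.1 x.2 = ∫⁻ x₁, ∫⁻ x₂, Ψ y₁ y₂ x₁ x₂ :=
    lintegral_prod _ (hΨ.comp (measurable_prodMk_left (x := (y₁, y₂)))).aemeasurable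
  calc ∫⁻ p, Φ p ∂(Vm α).prod (Vm β) = ∫⁻ z₁, (∫⁻ z₂, Φ (z₁, z₂) ∂Vm β) ∂Vm α :=
        lintegral_prod _ hΦ.aemeasurable
    _ = ∫⁻ y₁, (∫⁻ x₁, ∫⁻ y₂, (∫⁻ x₂, Ψ y₁ y₂ x₁ x₂) ∂powMeasure β) ∂powMeasure α := by
        rw [lintegral_Vm α hΦ.lintegral_prod_right']
        exact lintegral_congr fun y₁ => lintegral_congr fun x₁ =>
          lintegral_Vm β (hΦ.comp measurable_prodMk_left)
    _ = ∫⁻ y₁, (∫⁻ y₂, (∫⁻ x : ℝ × ℝ, Ψ y₁ y₂ x.1 x.2) ∂powMeasure β) ∂powMeasure α := by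
        simp only [hswap, hplane]
    _ = ∫⁻ y, (∫⁻ x : ℝ × ℝ, Ψ y.1 y.2 x.1 x.2) ∂(powMeasure α).prod (powMeasure β) :=
        (lintegral_prod _ hΨ.lintegral_prod_right'.aemeasurable).symm

lemma measurable_fourierLaplace {ι : Type*} [Fintype ι] {f : (ι → ℝ) → ℂ} (hf : Measurable f) :
    Measurable (fourierLaplace f) := by
  have hkernel : Measurable fun p : (ι → ℂ) × (ι → ℝ) => fourierKernel p.1 p.2 := by
    unfold fourierKernel
    fun_prop
  exact (StronglyMeasurable.integral_prod_right
    (hkernel.mul (hf.comp measurable_snd)).stronglyMeasurable).measurable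

lemma measurable_vecCons_pair {α : Type*} [MeasurableSpace α] :
    Measurable fun p : α × α => ![p.1, p.2] :=
  (MeasurableEquiv.finTwoArrow (α := α)).symm.measurable

lemma lintegral_enorm_fourierLaplace_pair_sq_le {h : (Fin 2 → ℝ) → ℂ} (hmeas : Measurable h)
    {y : ℝ × ℝ} (hint : Integrable fun ξ => expWeight ![y.1, y.2] ξ * h ξ) :
    ∫⁻ x : ℝ × ℝ, ‖fourierLaplace h ![x.1 + y.1 * I, x.2 + y.2 * I]‖ₑ ^ 2 ≤
      ∫⁻ ξ, ENNReal.ofReal (Real.exp (-(4 * Real.pi * ξ 0 * y.1))) *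
        ENNReal.ofReal (Real.exp (-(4 * Real.pi * ξ 1 * y.2))) * ‖h ξ‖ₑ ^ 2 := by
  have hpoint (x : Fin 2 → ℝ) :
      tubePoint x ![y.1, y.2] = ![x 0 + y.1 * I, x 1 + y.2 * I] := by
    ext i
    fin_cases i <;> rfl
  have hpair : Measurable fun x : ℝ × ℝ => (![x.1 + y.1 * I, x.2 + y.2 * I] : Fin 2 → ℂ) :=
    measurable_vecCons_pair.comp
      (by fun_prop : Measurable fun x : ℝ × ℝ => ((x.1 + y.1 * I, x.2 + y.2 * I) : ℂ × ℂ))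
  calc ∫⁻ x : ℝ × ℝ, ‖fourierLaplace h ![x.1 + y.1 * I, x.2 + y.2 * I]‖ₑ ^ 2
      = ∫⁻ x, ‖fourierLaplace h (tubePoint x ![y.1, y.2])‖ₑ ^ 2 := by
        simp only [hpoint]
        exact ((volume_preserving_finTwoArrow ℝ).lintegral_comp
          (((measurable_fourierLaplace hmeas).comp hpair).enorm.pow_const 2)).symm
    _ ≤ ∫⁻ ξ, ‖expWeight ![y.1, y.2] ξ * h ξ‖ₑ ^ 2 := lintegral_enorm_fourierLaplace_sq_le hint
    _ = _ := lintegral_congr fun ξ => by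
        rw [enorm_expWeight_mul_sq, ← ENNReal.ofReal_mul (Real.exp_pos _).le, ← Real.exp_add]
        simp only [dotProduct, Fin.sum_univ_two, Matrix.cons_val]
        ring_nf

theorem bergNormSqProd_fourierLaplace_le (α β : ℝ) {h : (Fin 2 → ℝ) → ℂ} (hmeas : Measurable h)
    (hint : LaplaceIntegrable {y | ∀ i, 0 < y i} h) :
    bergNormSqProd α β (fun p => fourierLaplace h ![p.1, p.2]) ≤
      ∫⁻ ξ, powLaplace α (4 * Real.pi * ξ 0) * powLaplace β (4 * Real.pi * ξ 1) * ‖h ξ‖ₑ ^ 2 := by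
  let E (s t : ℝ) : ℝ≥0∞ := ENNReal.ofReal (Real.exp (-(4 * Real.pi * s * t)))
  have hE (s : ℝ) : Measurable (E s) := by fun_prop
  have hpos : ∀ᵐ y ∂(powMeasure α).prod (powMeasure β), 0 < y.1 ∧ 0 < y.2 :=
    (Measure.quasiMeasurePreserving_fst.ae (ae_powMeasure_pos α)).and
      (Measure.quasiMeasurePreserving_snd.ae (ae_powMeasure_pos β))
  calc bergNormSqProd α β (fun p => fourierLaplace h ![p.1, p.2])
      = ∫⁻ y, (∫⁻ x : ℝ × ℝ, ‖fourierLaplace h ![x.1 + y.1 * I, x.2 + y.2 * I]‖ₑ ^ 2)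
          ∂(powMeasure α).prod (powMeasure β) :=
        lintegral_Vm_prod α β
          (((measurable_fourierLaplace hmeas).comp measurable_vecCons_pair).enorm.pow_const 2)
    _ ≤ ∫⁻ y, (∫⁻ ξ : Fin 2 → ℝ, E (ξ 0) y.1 * E (ξ 1) y.2 * ‖h ξ‖ₑ ^ 2)
          ∂(powMeasure α).prod (powMeasure β) := by
        refine lintegral_mono_ae (hpos.mono fun y hy => ?_)
        refine lintegral_enorm_fourierLaplace_pair_sq_le hmeas (hint _ fun i => ?_)
        fin_cases i
        exacts [hy.1, hy.2]
    _ = ∫⁻ ξ : Fin 2 → ℝ, ∫⁻ y, E (ξ 0) y.1 * E (ξ 1) y.2 * ‖h ξ‖ₑ ^ 2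
          ∂(powMeasure α).prod (powMeasure β) :=
        lintegral_lintegral_swap (by fun_prop)
    _ = ∫⁻ ξ, powLaplace α (4 * Real.pi * ξ 0) * powLaplace β (4 * Real.pi * ξ 1) *
          ‖h ξ‖ₑ ^ 2 := lintegral_congr fun ξ => by
        rw [lintegral_mul_const _ (by fun_prop),
          lintegral_prod_mul (hE (ξ 0)).aemeasurable (hE (ξ 1)).aemeasurable]
        rfl

end WeightedBergman

section FiberIntegral

variable {n : ℕ}

/-- Appending a last coordinate, as a measurable equivalence. -/
def snocEquiv (n : ℕ) : (Fin n → ℝ) × ℝ ≃ᵐ (Fin (n + 1) → ℝ) :=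
  MeasurableEquiv.prodComm.trans
    (MeasurableEquiv.piFinSuccAbove (fun _ : Fin (n + 1) => ℝ) (Fin.last n)).symm

lemma snocEquiv_apply (p : (Fin n → ℝ) × ℝ) : snocEquiv n p = Fin.snoc p.1 p.2 :=
  Fin.insertNth_last' p.2 p.1

lemma measurePreserving_snocEquiv : MeasurePreserving (snocEquiv n) :=
  ((volume_preserving_piFinSuccAbove (fun _ : Fin (n + 1) => ℝ) (Fin.last n)).symm _).comp
    Measure.measurePreserving_swap

/-- The integral of `g` over the fibre above `ξ` of the projection forgetting the last coordinate.
On the Fourier side this is restriction to the hyperplane where the last variable vanishes. -/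
def fiberIntegral (g : (Fin (n + 1) → ℝ) → ℂ) (ξ : Fin n → ℝ) : ℂ :=
  ∫ t, g (Fin.snoc ξ t)

lemma measurable_comp_snoc {β : Type*} [MeasurableSpace β] {g : (Fin (n + 1) → ℝ) → β}
    (hg : Measurable g) : Measurable fun p : (Fin n → ℝ) × ℝ => g (Fin.snoc p.1 p.2) := by
  simpa only [Function.comp_def, snocEquiv_apply] using hg.comp (snocEquiv n).measurable

lemma integrable_comp_snoc {g : (Fin (n + 1) → ℝ) → ℂ} (hg : Integrable g) :
    Integrable fun p : (Fin n → ℝ) × ℝ => g (Fin.snoc p.1 p.2) := by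
  simpa only [Function.comp_def, snocEquiv_apply] using
    measurePreserving_snocEquiv.integrable_comp_of_integrable hg

lemma integral_fiberIntegral {g : (Fin (n + 1) → ℝ) → ℂ} (hg : Integrable g) :
    ∫ ξ, fiberIntegral g ξ = ∫ ξ, g ξ := by
  rw [← measurePreserving_snocEquiv.integral_comp (snocEquiv n).measurableEmbedding]
  simp only [snocEquiv_apply]
  exact (integral_prod _ (integrable_comp_snoc hg)).symm

lemma lintegral_lintegral_snoc {φ : (Fin (n + 1) → ℝ) → ℝ≥0∞} (hφ : Measurable φ) :
    ∫⁻ ξ : Fin n → ℝ, ∫⁻ t, φ (Fin.snoc ξ t) = ∫⁻ ξ, φ ξ := by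
  rw [← measurePreserving_snocEquiv.lintegral_comp hφ]
  simp only [snocEquiv_apply]
  exact (lintegral_prod _ (measurable_comp_snoc hφ).aemeasurable).symm

lemma measurable_fiberIntegral {g : (Fin (n + 1) → ℝ) → ℂ} (hg : Measurable g) :
    Measurable (fiberIntegral g) :=
  (StronglyMeasurable.integral_prod_right (f := fun ξ t => g (Fin.snoc ξ t))
    (measurable_comp_snoc hg).stronglyMeasurable).measurable

lemma expWeight_snoc (y ξ : Fin n → ℝ) (t : ℝ) :
    expWeight (Fin.snoc y 0 : Fin (n + 1) → ℝ) (Fin.snoc ξ t) = expWeight y ξ := by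
  simp [expWeight, dotProduct, Fin.sum_univ_castSucc]

lemma fourierKernel_snoc (z : Fin n → ℂ) (ξ : Fin n → ℝ) (t : ℝ) :
    fourierKernel (Fin.snoc z 0 : Fin (n + 1) → ℂ) (Fin.snoc ξ t) = fourierKernel z ξ := by
  simp [fourierKernel, Fin.sum_univ_castSucc]

lemma fourierLaplace_snoc_zero {g : (Fin (n + 1) → ℝ) → ℂ} {z : Fin n → ℂ}
    (hg : Integrable fun ξ => fourierKernel (Fin.snoc z 0 : Fin (n + 1) → ℂ) ξ * g ξ) :
    fourierLaplace g (Fin.snoc z 0 : Fin (n + 1) → ℂ) = fourierLaplace (fiberIntegral g) z := by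
  rw [fourierLaplace, ← integral_fiberIntegral hg]
  simp only [fiberIntegral, fourierKernel_snoc, integral_const_mul, fourierLaplace]

lemma laplaceIntegrable_fiberIntegral {Ω : Set (Fin (n + 1) → ℝ)} {Ω' : Set (Fin n → ℝ)}
    {g : (Fin (n + 1) → ℝ) → ℂ} (hg : LaplaceIntegrable Ω g)
    (hΩ' : ∀ y ∈ Ω', (Fin.snoc y 0 : Fin (n + 1) → ℝ) ∈ Ω) :
    LaplaceIntegrable Ω' (fiberIntegral g) := fun y hy => by
  have hint := (integrable_comp_snoc (hg _ (hΩ' y hy))).integral_prod_left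
  simp only [expWeight_snoc, integral_const_mul] at hint
  exact hint

end FiberIntegral

section CauchySchwarz

lemma enorm_integral_sq_le {α : Type*} [MeasurableSpace α] {E : Type*} [NormedAddCommGroup E]
    [NormedSpace ℝ E] (μ : Measure α) (f : α → E) :
    ‖∫ x, f x ∂μ‖ₑ ^ 2 ≤ μ univ * ∫⁻ x, ‖f x‖ₑ ^ 2 ∂μ := by
  by_cases hf : AEStronglyMeasurable f μ
  swap
  · simp [integral_non_aestronglyMeasurable hf]
  have hle := eLpNorm_le_eLpNorm_mul_rpow_measure_univ one_le_two hf
  rw [eLpNorm_one_eq_lintegral_enorm] at hle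
  calc ‖∫ x, f x ∂μ‖ₑ ^ 2 ≤ (eLpNorm f 2 μ * μ univ ^ (2⁻¹ : ℝ)) ^ 2 := by
        gcongr
        refine (enorm_integral_le_lintegral_enorm f).trans (hle.trans_eq ?_)
        norm_num
    _ = μ univ * ∫⁻ x, ‖f x‖ₑ ^ 2 ∂μ := by
        rw [mul_pow, ← lintegral_enorm_sq_eq_eLpNorm_sq, ← ENNReal.rpow_mul_natCast, mul_comm]
        norm_num

end CauchySchwarz

section FiberEstimate

variable {f : (Fin 3 → ℝ) → ℂ}

lemma fiber_bounds (hf : Function.support f ⊆ dualCone (sphericalCone : Set (Fin 3 → ℝ)))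
    {ξ : Fin 2 → ℝ} {t : ℝ} (ht : f (Fin.snoc ξ t : Fin 3 → ℝ) ≠ 0) :
    0 ≤ ξ 0 ∧ 0 ≤ ξ 1 ∧ t ^ 2 ≤ 4 * (ξ 0 * ξ 1) :=
  sq_le_of_mem_dualCone_sphericalCone (hf ht)

lemma fiberIntegral_boxSymbol_pow_mul_eq_zero
    (hf : Function.support f ⊆ dualCone (sphericalCone : Set (Fin 3 → ℝ))) (m : ℕ)
    {ξ : Fin 2 → ℝ} (hξ : ¬(0 < ξ 0 ∧ 0 < ξ 1)) :
    fiberIntegral (fun η => boxSymbol η ^ m * f η) ξ = 0 := by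
  refine integral_eq_zero_of_ae ((Measure.ae_ne volume (0 : ℝ)).mono fun t ht => ?_)
  by_contra hne
  obtain ⟨h0, h1, hle⟩ := fiber_bounds hf (right_ne_zero_of_mul hne)
  have hpos : 0 < ξ 0 * ξ 1 := by nlinarith [sq_pos_of_ne_zero ht]
  exact hξ ⟨pos_of_mul_pos_left hpos h1, pos_of_mul_pos_right hpos h0⟩

lemma enorm_boxSymbol_pow_mul_le
    (hf : Function.support f ⊆ dualCone (sphericalCone : Set (Fin 3 → ℝ))) (m : ℕ)
    (ξ : Fin 2 → ℝ) (t : ℝ) :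
    ‖(boxSymbol (Fin.snoc ξ t) : ℂ) ^ m * f (Fin.snoc ξ t)‖ₑ ≤
      ENNReal.ofReal ((16 * Real.pi ^ 2 * (ξ 0 * ξ 1)) ^ m) * ‖f (Fin.snoc ξ t)‖ₑ := by
  by_cases ht : f (Fin.snoc ξ t : Fin 3 → ℝ) = 0
  · simp [ht]
  obtain ⟨-, -, hle⟩ := fiber_bounds hf ht
  have hsymbol : boxSymbol (Fin.snoc ξ t) = 4 * Real.pi ^ 2 * (4 * (ξ 0 * ξ 1) - t ^ 2) := by
    rw [boxSymbol, ← mul_assoc 4 (ξ 0)]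
    rfl
  have hnonneg : 0 ≤ boxSymbol (Fin.snoc ξ t) := by
    rw [hsymbol]
    exact mul_nonneg (by positivity) (sub_nonneg.2 hle)
  have hbound : boxSymbol (Fin.snoc ξ t) ≤ 16 * Real.pi ^ 2 * (ξ 0 * ξ 1) := by
    rw [hsymbol]
    nlinarith [mul_nonneg (sq_nonneg Real.pi) (sq_nonneg t)]
  rw [enorm_mul, ← ofReal_pow, ← ofReal_norm, norm_real,
    Real.norm_of_nonneg (pow_nonneg hnonneg m)]
  gcongr

lemma enorm_fiberIntegral_boxSymbol_pow_mul_sq_le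
    (hf : Function.support f ⊆ dualCone (sphericalCone : Set (Fin 3 → ℝ))) (m : ℕ)
    {ξ : Fin 2 → ℝ} (h0 : 0 < ξ 0) (h1 : 0 < ξ 1) :
    ‖fiberIntegral (fun η => boxSymbol η ^ m * f η) ξ‖ₑ ^ 2 ≤
      ENNReal.ofReal ((16 * Real.pi ^ 2 * (ξ 0 * ξ 1)) ^ (2 * m) * (4 * √(ξ 0 * ξ 1))) *
        ∫⁻ t, ‖f (Fin.snoc ξ t)‖ₑ ^ 2 := by
  set Q := 16 * Real.pi ^ 2 * (ξ 0 * ξ 1)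
  let g : ℝ → ℂ := fun t => boxSymbol (Fin.snoc ξ t) ^ m * f (Fin.snoc ξ t)
  let B : Set ℝ := Icc (-√(4 * (ξ 0 * ξ 1))) √(4 * (ξ 0 * ξ 1))
  have hB (t : ℝ) (ht : t ∉ B) : g t = 0 := by
    by_contra hne
    exact ht (abs_le.1 (Real.abs_le_sqrt (fiber_bounds hf (right_ne_zero_of_mul hne)).2.2))
  have hvol : volume B = ENNReal.ofReal (4 * √(ξ 0 * ξ 1)) := by
    rw [Real.volume_Icc, Real.sqrt_mul zero_le_four, show √(4 : ℝ) = 2 by norm_num]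
    ring_nf
  calc ‖fiberIntegral (fun η => boxSymbol η ^ m * f η) ξ‖ₑ ^ 2
      = ‖∫ t in B, g t‖ₑ ^ 2 := by
        rw [setIntegral_eq_integral_of_forall_compl_eq_zero hB, fiberIntegral]
    _ ≤ volume B * ∫⁻ t in B, ‖g t‖ₑ ^ 2 := by
        simpa only [Measure.restrict_apply_univ] using enorm_integral_sq_le (volume.restrict B) g
    _ ≤ volume B * ∫⁻ t, (ENNReal.ofReal (Q ^ m) * ‖f (Fin.snoc ξ t)‖ₑ) ^ 2 := by
        refine mul_le_mul_right ?_ _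
        exact (setLIntegral_le_lintegral _ _).trans
          (lintegral_mono fun t => pow_le_pow_left' (enorm_boxSymbol_pow_mul_le hf m ξ t) 2)
    _ = _ := by
        simp only [mul_pow]
        rw [lintegral_const_mul' _ _ (by simp), hvol, ← mul_assoc, mul_comm (ENNReal.ofReal _),
          ← ENNReal.ofReal_pow (by positivity), ← ENNReal.ofReal_mul (by positivity), ← pow_mul,
          mul_comm m]

end FiberEstimate

section RestrictionConstant

/-- The constant of the restriction theorem: one factor `Γ(2m + 1/2)` for each vertical integral of
the Bergman norm, and `1 / π` left over from the length `4√(ξ₀ξ₁)` of the fibres. -/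
def restrictionConst (m : ℕ) : ℝ :=
  Real.Gamma (2 * m + 1 / 2) ^ 2 / Real.pi

lemma restrictionConst_pos (m : ℕ) : 0 < restrictionConst m :=
  div_pos (pow_pos (Real.Gamma_pos_of_pos (by positivity)) 2) Real.pi_pos

lemma gamma_weights_mul_fiber_factor_eq (m : ℕ) {p q : ℝ} (hp : 0 < p) (hq : 0 < q) :
    (1 / (4 * Real.pi * p)) ^ (2 * m + 1 / 2 : ℝ) * Real.Gamma (2 * m + 1 / 2) *
        ((1 / (4 * Real.pi * q)) ^ (2 * m + 1 / 2 : ℝ) * Real.Gamma (2 * m + 1 / 2)) *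
      ((16 * Real.pi ^ 2 * (p * q)) ^ (2 * m) * (4 * √(p * q))) = restrictionConst m := by
  have : 0 < √(p * q) := Real.sqrt_pos.2 (mul_pos hp hq)
  set Q := 16 * Real.pi ^ 2 * (p * q) with hQ
  have hQ0 : 0 < Q := by positivity
  have hsqrt : √Q = 4 * Real.pi * √(p * q) := by
    rw [hQ, Real.sqrt_mul (by positivity), show 16 * Real.pi ^ 2 = (4 * Real.pi) ^ 2 by ring,
      Real.sqrt_sq (by positivity)]
  have hpow : (1 / (4 * Real.pi * p)) ^ (2 * m + 1 / 2 : ℝ) *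
      (1 / (4 * Real.pi * q)) ^ (2 * m + 1 / 2 : ℝ) = (Q ^ (2 * m) * √Q)⁻¹ := by
    have hinv : 1 / (4 * Real.pi * p) * (1 / (4 * Real.pi * q)) = Q⁻¹ := by
      rw [hQ]
      field_simp
      ring
    rw [← Real.mul_rpow (by positivity) (by positivity), hinv, Real.inv_rpow hQ0.le,
      Real.rpow_add hQ0, Real.sqrt_eq_rpow]
    exact_mod_cast congrArg (fun r => (r * Q ^ (1 / 2 : ℝ))⁻¹) (Real.rpow_natCast Q (2 * m))
  rw [mul_mul_mul_comm (_ ^ _ : ℝ), hpow, hsqrt, restrictionConst]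
  field_simp

lemma powLaplace_mul_enorm_fiberIntegral_sq_le {f : (Fin 3 → ℝ) → ℂ}
    (hf : Function.support f ⊆ dualCone (sphericalCone : Set (Fin 3 → ℝ))) (m : ℕ)
    (ξ : Fin 2 → ℝ) :
    powLaplace (2 * m - 1 / 2) (4 * Real.pi * ξ 0) *
        powLaplace (2 * m - 1 / 2) (4 * Real.pi * ξ 1) *
        ‖fiberIntegral (fun η => boxSymbol η ^ m * f η) ξ‖ₑ ^ 2 ≤
      ENNReal.ofReal (restrictionConst m) * ∫⁻ t, ‖f (Fin.snoc ξ t)‖ₑ ^ 2 := by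
  by_cases hξ : 0 < ξ 0 ∧ 0 < ξ 1
  swap
  · simp [fiberIntegral_boxSymbol_pow_mul_eq_zero hf m hξ]
  obtain ⟨h0, h1⟩ := hξ
  have hα : -1 < 2 * (m : ℝ) - 1 / 2 := by linarith [m.cast_nonneg (α := ℝ)]
  have hweight (s : ℝ) (hs : 0 < s) : powLaplace (2 * m - 1 / 2) (4 * Real.pi * s) =
      ENNReal.ofReal ((1 / (4 * Real.pi * s)) ^ (2 * m + 1 / 2 : ℝ) *
        Real.Gamma (2 * m + 1 / 2)) := by
    rw [powLaplace_eq hα (by positivity)]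
    ring_nf
  have hnonneg (s : ℝ) (hs : 0 < s) : 0 ≤ (1 / (4 * Real.pi * s)) ^ (2 * m + 1 / 2 : ℝ) *
      Real.Gamma (2 * m + 1 / 2) :=
    mul_nonneg (by positivity) (Real.Gamma_pos_of_pos (by positivity)).le
  refine (mul_le_mul_right (enorm_fiberIntegral_boxSymbol_pow_mul_sq_le hf m h0 h1) _).trans_eq ?_
  rw [← mul_assoc, hweight _ h0, hweight _ h1, ← ENNReal.ofReal_mul (hnonneg _ h0),
    ← ENNReal.ofReal_mul (mul_nonneg (hnonneg _ h0) (hnonneg _ h1)),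
    gamma_weights_mul_fiber_factor_eq m h0 h1]

lemma bergNormSqProd_fourierLaplace_boxSymbol_le {f : (Fin 3 → ℝ) → ℂ} (hmeas : Measurable f)
    (hsupp : Function.support f ⊆ dualCone (sphericalCone : Set (Fin 3 → ℝ)))
    (hint : LaplaceIntegrable (sphericalCone : Set (Fin 3 → ℝ)) f) (m : ℕ) :
    bergNormSqProd (2 * m - 1 / 2) (2 * m - 1 / 2)
        (fun p => fourierLaplace (fiberIntegral fun ξ => boxSymbol ξ ^ m * f ξ) ![p.1, p.2]) ≤
      ENNReal.ofReal (restrictionConst m) * ∫⁻ ξ, ‖f ξ‖ₑ ^ 2 := by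
  have hsymbol : Measurable fun ξ => (boxSymbol ξ : ℂ) ^ m * f ξ := by
    have : Measurable boxSymbol := by
      unfold boxSymbol
      fun_prop
    fun_prop
  have hfiber := laplaceIntegrable_fiberIntegral (Ω' := {y | ∀ i, 0 < y i})
    (hint.boxSymbol_pow_mul isOpen_sphericalCone m) fun _ => snoc_zero_mem_sphericalCone
  refine (bergNormSqProd_fourierLaplace_le _ _ (measurable_fiberIntegral hsymbol) hfiber).trans ?_
  refine (lintegral_mono fun ξ => powLaplace_mul_enorm_fiberIntegral_sq_le hsupp m ξ).trans_eq ?_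
  rw [lintegral_const_mul' _ _ ENNReal.ofReal_ne_top,
    lintegral_lintegral_snoc (hmeas.enorm.pow_const 2)]

end RestrictionConstant

section Restriction

variable {F : (Fin 3 → ℂ) → ℂ} {f : (Fin 3 → ℝ) → ℂ}

lemma cons_cons_zero_eq_snoc (p : ℂ × ℂ) :
    (![p.1, p.2, 0] : Fin 3 → ℂ) = Fin.snoc ![p.1, p.2] 0 := by
  ext i
  fin_cases i <;> rfl

lemma cons_cons_zero_mem_TSigma {p : ℂ × ℂ} (hp : p ∈ UHP ×ˢ UHP) :
    (![p.1, p.2, 0] : Fin 3 → ℂ) ∈ TSigma := by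
  have himag : 0 < p.1.im * p.2.im - (0 : ℂ).im ^ 2 := by simpa using mul_pos hp.1 hp.2
  exact ⟨himag, hp.1⟩

lemma bergNormSqProd_congr (α β : ℝ) {G H : ℂ × ℂ → ℂ} (h : EqOn G H (UHP ×ˢ UHP)) :
    bergNormSqProd α β G = bergNormSqProd α β H := by
  have hmem : ∀ᵐ p ∂(Vm α).prod (Vm β), p ∈ UHP ×ˢ UHP :=
    (Measure.quasiMeasurePreserving_fst.ae (ae_mem_UHP α)).and
      (Measure.quasiMeasurePreserving_snd.ae (ae_mem_UHP β))
  exact lintegral_congr_ae (hmem.mono fun p hp => by simp only [h hp])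

lemma isHardyBounded_hardyNormSqSigma (hF : DifferentiableOn ℂ F TSigma)
    (hN : hardyNormSqSigma F < ⊤) :
    IsHardyBounded (sphericalCone : Set (Fin 3 → ℝ)) (hardyNormSqSigma F) F where
  differentiableOn := hF
  ne_top := hN.ne
  lintegral_le y hy :=
    le_iSup₂ (f := fun y (_ : y ∈ Sigma3) => ∫⁻ x, ‖F (tubePoint x y)‖ₑ ^ 2) y hy

lemma LaplaceIntegrable.differentiableOn_iterate_boxS_restrict
    (hf : LaplaceIntegrable (sphericalCone : Set (Fin 3 → ℝ)) f)
    (hF : EqOn F (fourierLaplace f) TSigma) (m : ℕ) :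
    DifferentiableOn ℂ (fun p : ℂ × ℂ => BoxS^[m] F ![p.1, p.2, 0]) (UHP ×ˢ UHP) := by
  have hrestrict : DifferentiableOn ℂ (fun p : ℂ × ℂ => (![p.1, p.2, 0] : Fin 3 → ℂ))
      (UHP ×ˢ UHP) := differentiableOn_pi.2 fun i => by
    fin_cases i
    exacts [differentiableOn_fst, differentiableOn_snd, differentiableOn_const 0]
  have hsymbol := hf.boxSymbol_pow_mul isOpen_sphericalCone m
  exact ((hsymbol.differentiableOn_fourierLaplace isOpen_sphericalCone).congr
    (hf.iterate_boxS_eqOn isOpen_sphericalCone hF m)).comp hrestrict fun _ =>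
      cons_cons_zero_mem_TSigma

lemma LaplaceIntegrable.iterate_boxS_restrict_eqOn
    (hf : LaplaceIntegrable (sphericalCone : Set (Fin 3 → ℝ)) f)
    (hF : EqOn F (fourierLaplace f) TSigma) (m : ℕ) :
    EqOn (fun p : ℂ × ℂ => BoxS^[m] F ![p.1, p.2, 0])
      (fun p => fourierLaplace (fiberIntegral fun ξ => boxSymbol ξ ^ m * f ξ) ![p.1, p.2])
      (UHP ×ˢ UHP) := fun p hp => by
  have hmem := cons_cons_zero_mem_TSigma hp
  have hkernel := (hf.boxSymbol_pow_mul isOpen_sphericalCone m).integrable_fourierKernel_mul hmem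
  rw [cons_cons_zero_eq_snoc] at hmem hkernel
  simp only [cons_cons_zero_eq_snoc]
  rw [hf.iterate_boxS_eqOn isOpen_sphericalCone hF m hmem, fourierLaplace_snoc_zero hkernel]

end Restriction

/-- there is `C_m > 0` such that for every `F ∈ H²(T_Σ)`, the restriction
`(z₁,z₂) ↦ (□^m F)(z₁,z₂,0)` belongs to `A²_{(2m−1/2,2m−1/2)}(Π⁺×Π⁺)` with
`‖R□^m F‖² ≤ C_m ‖F‖²_{H²(T_Σ)}`. -/
theorem restriction_bounded_into_bergman_prod (m : ℕ) :
    ∃ C : ℝ, 0 < C ∧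
      ∀ F : (Fin 3 → ℂ) → ℂ, DifferentiableOn ℂ F TSigma → hardyNormSqSigma F < ⊤ →
        DifferentiableOn ℂ (fun p : ℂ × ℂ => BoxS^[m] F ![p.1, p.2, 0]) (UHP ×ˢ UHP) ∧
        bergNormSqProd (2 * m - 1 / 2) (2 * m - 1 / 2)
            (fun p : ℂ × ℂ => BoxS^[m] F ![p.1, p.2, 0]) ≤
          ENNReal.ofReal C * hardyNormSqSigma F := by
  refine ⟨restrictionConst m, restrictionConst_pos m, fun F hF hN => ?_⟩
  have hcone : (sphericalCone : Set (Fin 3 → ℝ)).Nonempty :=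
    ⟨_, snoc_zero_mem_sphericalCone (y := 1) fun _ => one_pos⟩
  obtain ⟨f, hmeas, h2, hsupp, hFf, hfN⟩ :=
    (isHardyBounded_hardyNormSqSigma hF hN).exists_eqOn_fourierLaplace isOpen_sphericalCone hcone
  have hint := laplaceIntegrable_of_memLp_two isOpen_sphericalCone h2 hsupp
  refine ⟨hint.differentiableOn_iterate_boxS_restrict hFf m, ?_⟩
  rw [bergNormSqProd_congr _ _ (hint.iterate_boxS_restrict_eqOn hFf m)]
  exact (bergNormSqProd_fourierLaplace_boxSymbol_le hmeas hsupp hint m).trans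
    (mul_le_mul_right hfN _)
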